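/- arXiv:2605.14009 — 9 statements merged into one kernel-verified Lean document; each statement's English description precedes it below -/
import Mathlib

section
/- (ZKW case.) Let q = p^m, r = p^k, d = gcd(k,m), and suppose m/d is odd and m/d + k/d ≡ 0 (mod 3). Let ω be a generator of the multiplicative group F_{q^3}^× and define F_{r,ω}(X) = X^{r+1} − ω^{q−1}·X^{qr+q²} on F_{q^3}. Then there exist a,b,c ∈ F_q and F_q-bases (v_1,v_2,v_3) and (u_1,u_2,u_3) of F_{q^3} such that F_{r,ω}(x·v_1 + y·v_2 + z·v_3) = f(x,y,z)·u_1 + g(x,y,z)·u_2 + h(x,y,z)·u_3 for all x,y,z ∈ F_q, where f(x,y,z) = x^{r+1} + a·y^r·z + b·x^r·y + c·x^r·z, g(x,y,z) = a·y^{r+1} + z^r·x + b·z^r·y + c·x^r·y, h(x,y,z) = z^{r+1} − x^r·y. That is, every Zha–Kyureghyan–Wang planar function is GL(3,q)-equivalent to a member of the family of Theorem 1.4 with σ = r. -/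
theorem zkw_dvd (p m k : ℕ) (hm : 0 < m)
    (h3 : (m / Nat.gcd k m + k / Nat.gcd k m) % 3 = 0) :
    ∃ g : ℕ, 1 < g + p * 0 ∧ (0 < p → (g : ℤ) ∣ (p:ℤ) ^ (m + k) - 1 ∧
      (g : ℤ) ∣ ((p:ℤ) ^ m) ^ 2 + (p:ℤ) ^ m + 1) := by
  by_cases hp : 0 < p
  swap
  · exact ⟨2, by norm_num, fun h => absurd h hp⟩
  set d := Nat.gcd k m with hd
  have hd0 : 0 < d := Nat.gcd_pos_of_pos_right _ hm
  obtain ⟨m', hm'⟩ : d ∣ m := Nat.gcd_dvd_right k m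
  obtain ⟨k', hk'⟩ : d ∣ k := Nat.gcd_dvd_left k m
  have e1 : m / d = m' := by rw [hm']; exact Nat.mul_div_cancel_left _ hd0
  have e2 : k / d = k' := by rw [hk']; exact Nat.mul_div_cancel_left _ hd0
  have hco : Nat.Coprime (k / d) (m / d) := Nat.coprime_div_gcd_div_gcd hd0
  rw [e1, e2] at h3 hco
  have hm3 : m' % 3 ≠ 0 := by
    intro h
    have h1 : 3 ∣ m' := Nat.dvd_of_mod_eq_zero h
    have h2 : 3 ∣ k' := by omega
    have := Nat.dvd_gcd h2 h1
    rw [hco] at this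
    omega
  have hP : 0 < p ^ d := Nat.pow_pos hp
  refine ⟨(p ^ d) ^ 2 + p ^ d + 1, by nlinarith, fun _ => ?_⟩
  push_cast
  have hpm : (p : ℤ) ^ m = ((p:ℤ) ^ d) ^ m' := by rw [← pow_mul, ← hm']
  have hpmk : (p : ℤ) ^ (m + k) = ((p:ℤ) ^ d) ^ (m' + k') := by
    rw [← pow_mul, mul_add, ← hm', ← hk']
  rw [hpm, hpmk]
  generalize (p:ℤ) ^ d = P
  have hc : P ^ 3 ≡ 1 [ZMOD P ^ 2 + P + 1] := by
    apply Int.ModEq.symm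
    rw [Int.modEq_iff_dvd]
    exact ⟨P - 1, by ring⟩
  constructor
  · obtain ⟨j, hj⟩ := Nat.dvd_of_mod_eq_zero h3
    rw [hj, pow_mul]
    have := (hc.pow j).symm
    rw [one_pow] at this
    exact Int.modEq_iff_dvd.1 this
  · apply Int.modEq_zero_iff_dvd.1
    have hm4 : m' % 3 = 1 ∨ m' % 3 = 2 := by omega
    have hdm : m' = 3 * (m' / 3) + m' % 3 := by omega
    have key : P ^ m' ≡ P ^ (m' % 3) [ZMOD P ^ 2 + P + 1] := by
      conv_lhs => rw [hdm, pow_add, pow_mul]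
      simpa using (hc.pow (m' / 3)).mul_right (P ^ (m' % 3))
    have k2 := ((key.pow 2).add key).add_right 1
    refine k2.trans ?_
    rcases hm4 with h | h <;> rw [h]
    · simp
    · apply Int.modEq_zero_iff_dvd.2
      exact ⟨P ^ 2 - P + 1, by ring⟩

theorem zkw_fixed {K L : Type*} [Field K] [Fintype K] [Field L] [Algebra K L] (y : L)
    (hy : y ^ Fintype.card K = y) : ∃ κ : K, y = algebraMap K L κ := by
  classical
  have h1 := Fintype.one_lt_card (α := K)
  have hmon : (Polynomial.X ^ Fintype.card K - Polynomial.X : Polynomial K).Monic :=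
    Polynomial.monic_X_pow_sub (by simpa using h1)
  have h := Polynomial.prod_multiset_X_sub_C_of_monic_of_roots_card_eq hmon (by
    rw [FiniteField.roots_X_pow_card_sub_X, FiniteField.X_pow_card_sub_X_natDegree_eq K h1]
    rfl)
  rw [FiniteField.roots_X_pow_card_sub_X] at h
  change ∏ a : K, (Polynomial.X - Polynomial.C a) = _ at h
  have h2 := congrArg (fun f => Polynomial.aeval y f) h
  simp only [map_prod, map_sub, Polynomial.aeval_X, Polynomial.aeval_C, map_pow, hy, sub_self] at h2
  obtain ⟨a, _, ha⟩ := Finset.prod_eq_zero_iff.1 h2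
  exact ⟨a, sub_eq_zero.1 ha⟩

theorem zkw_nonpower {p m k : ℕ} (hp : p.Prime) (hm : 0 < m)
    (h3 : (m / Nat.gcd k m + k / Nat.gcd k m) % 3 = 0)
    {K L : Type*} [Field K] [Fintype K] (hK : Fintype.card K = p ^ m)
    [Field L] [Algebra K L] [Fintype L] (hL : Fintype.card L = (p ^ m) ^ 3)
    (ω : Lˣ) (hω : ∀ x : Lˣ, x ∈ Subgroup.zpowers ω) (j : ℕ)
    (hj : j = p ^ m ∨ j = p ^ m + (p ^ m) ^ 2) (y : L) (hy : y ≠ 0) (κ : K) :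
    (ω : L) ^ j * y ^ p ^ (m + k) ≠ algebraMap K L κ * y := by
  intro h
  obtain ⟨g, hg, hg'⟩ := zkw_dvd p m k hm h3
  obtain ⟨g1, g2⟩ := hg' hp.pos
  have hq : 1 < p ^ m := Nat.one_lt_pow hm.ne' hp.one_lt
  have hqr : 1 ≤ p ^ (m + k) := Nat.one_le_pow _ _ hp.pos
  have g1' : g ∣ p ^ (m + k) - 1 := by
    zify [hqr]; exact g1
  have g2' : g ∣ (p ^ m) ^ 2 + p ^ m + 1 := by
    zify; exact g2
  obtain ⟨s, hs⟩ := g1'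
  obtain ⟨t, ht⟩ := g2'
  have hcard : Fintype.card L - 1 = (p ^ m - 1) * (g * t) := by
    rw [← ht, hL]
    zify [hq.le, Nat.one_le_pow 3 (p ^ m) (by omega)]
    ring
  have hκ : κ ≠ 0 := by
    rintro rfl
    simp [hy] at h
  have h1 : (ω : L) ^ j * y ^ (p ^ (m + k) - 1) = algebraMap K L κ := by
    apply mul_right_cancel₀ hy
    rw [← h, mul_assoc, ← pow_succ, Nat.sub_add_cancel hqr]
  have h2 := congrArg (fun z => z ^ ((p ^ m - 1) * t)) h1
  simp only [mul_pow] at h2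
  have hy1 : (y ^ (p ^ (m + k) - 1)) ^ ((p ^ m - 1) * t) = 1 := by
    rw [hs, ← pow_mul, show g * s * ((p ^ m - 1) * t) = ((p ^ m - 1) * (g * t)) * s by ring,
      ← hcard, pow_mul, FiniteField.pow_card_sub_one_eq_one y hy, one_pow]
  have hk1 : (algebraMap K L κ) ^ ((p ^ m - 1) * t) = 1 := by
    rw [pow_mul, ← map_pow, ← hK, FiniteField.pow_card_sub_one_eq_one κ hκ, map_one, one_pow]
  rw [hy1, hk1, mul_one, ← pow_mul] at h2
  have ho : orderOf ω = (p ^ m - 1) * (g * t) := by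
    rw [orderOf_eq_card_of_forall_mem_zpowers hω, Nat.card_units, Nat.card_eq_fintype_card, hcard]
  have h4 : ω ^ (j * ((p ^ m - 1) * t)) = 1 := by
    ext; simpa using h2
  have h5 := orderOf_dvd_of_pow_eq_one h4
  rw [ho] at h5
  have ht0 : 0 < t := by
    rcases Nat.eq_zero_or_pos t with h | h
    · rw [h] at ht; omega
    · exact h
  have h6 : g ∣ j := by
    apply Nat.dvd_of_mul_dvd_mul_right (k := (p ^ m - 1) * t) (Nat.mul_pos (by omega) ht0)
    convert h5 using 1; ring
  have hgQ : g ∣ (p ^ m) ^ 2 + p ^ m + 1 := ⟨t, ht⟩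
  have : g ∣ 1 := by
    rcases hj with rfl | rfl
    · have h7 : g ∣ (p ^ m) ^ 2 + p ^ m := by
        rw [show (p ^ m) ^ 2 + p ^ m = p ^ m * (p ^ m + 1) by ring]
        exact h6.mul_right _
      exact (Nat.dvd_add_right h7).1 hgQ
    · rw [add_comm] at h6
      exact (Nat.dvd_add_right h6).1 hgQ
  have := Nat.le_of_dvd one_pos this
  omega

theorem zkw_li3 {K L : Type*} [Field K] [Field L] [Algebra K L] (A B C : L)
    (h : ∀ x y z : K, algebraMap K L x * A + algebraMap K L y * B + algebraMap K L z * C = 0 →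
      x = 0 ∧ y = 0 ∧ z = 0) : LinearIndependent K ![A, B, C] := by
  rw [Fintype.linearIndependent_iff]
  intro f hf
  simp [Fin.sum_univ_three, Algebra.smul_def] at hf
  obtain ⟨h0, h1, h2⟩ := h _ _ _ hf
  intro i
  fin_cases i <;> assumption

/-- the alternating form vanishes only on dependent pairs -/
theorem zkw_alt {K L : Type*} [Field K] [Field L] [Algebra K L] (φ : L →ₐ[K] L)
    (hfix : ∀ y, φ y = y → ∃ κ : K, y = algebraMap K L κ) (A C : L) (hA : A ≠ 0)
    (h : A * φ C - φ A * C = 0) : ∃ κ : K, C = algebraMap K L κ * A := by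
  have hA' : φ A ≠ 0 := by simpa using hA
  obtain ⟨κ, hκ⟩ := hfix (C / A) (by
    rw [map_div₀, div_eq_div_iff hA' hA]; linear_combination h)
  exact ⟨κ, by rw [← hκ]; field_simp⟩

theorem zkw_main {K L : Type*} [Field K] [Field L] [Algebra K L] (hL : Module.finrank K L = 3)
    (φ : L →ₐ[K] L) (hfix : ∀ y, φ y = y → ∃ κ : K, y = algebraMap K L κ)
    (hφ3 : ∀ y, φ (φ (φ y)) = y) (ρ : L →+* L) (ρK : K ≃+* K)
    (hρ : ∀ x, ρ (algebraMap K L x) = algebraMap K L (ρK x))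
    (hcomm : ∀ y, ρ (φ y) = φ (ρ y)) (ω : L) (hω0 : ω ≠ 0)
    (h1 : ∀ y, y ≠ 0 → ∀ κ : K, φ ω * φ (ρ y) ≠ algebraMap K L κ * y)
    (h2 : ∀ y, y ≠ 0 → ∀ κ : K, φ ω * φ (φ ω) * φ (ρ y) ≠ algebraMap K L κ * y)
    (β : L) (hβ : β * ω = φ ω) :
    ∃ (a b c : K) (v u : Fin 3 → L),
      (LinearIndependent K v ∧ Submodule.span K (Set.range v) = ⊤) ∧
      (LinearIndependent K u ∧ Submodule.span K (Set.range u) = ⊤) ∧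
      ∀ x y z : K,
        ρ (x • v 0 + y • v 1 + z • v 2) * (x • v 0 + y • v 1 + z • v 2) -
            β * (φ (ρ (x • v 0 + y • v 1 + z • v 2)) * φ (φ (x • v 0 + y • v 1 + z • v 2))) =
          (ρK x * x + a * ρK y * z + b * ρK x * y + c * ρK x * z) • u 0 +
          (a * (ρK y * y) + ρK z * x + b * ρK z * y + c * ρK x * y) • u 1 +
          (ρK z * z - ρK x * y) • u 2 := by
  have hspan : ∀ v : Fin 3 → L, LinearIndependent K v →
      Submodule.span K (Set.range v) = ⊤ := fun v hv =>
    hv.span_eq_top_of_card_eq_finrank (by simp [hL])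
  set al := algebraMap K L with hal
  have hφal : ∀ x : K, φ (al x) = al x := fun x => φ.commutes x
  have hal0 : ∀ x : K, al x = 0 → x = 0 := fun x hx => (map_eq_zero al).1 hx
  -- the semilinear map
  obtain ⟨T, hT⟩ : ∃ T : L → L, ∀ y, T y = φ ω * φ (ρ y) := ⟨_, fun _ => rfl⟩
  have hTadd : ∀ x y, T (x + y) = T x + T y := by
    intro x y; simp only [hT, map_add]; ring
  have hTsm : ∀ (x : K) y, T (al x * y) = al (ρK x) * T y := by
    intro x y; simp only [hT, map_mul, hρ, hφal]; ring
  have hT0 : ∀ y, T y = 0 → y = 0 := by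
    intro y hy
    rw [hT] at hy
    simpa [hω0] using hy
  have hli : ∀ x y z : K, al x * 1 + al y * T 1 + al z * T (T 1) = 0 →
      x = 0 ∧ y = 0 ∧ z = 0 := by
    have hno : ∀ κ : K, T 1 ≠ al κ := by
      intro κ h
      apply h1 1 one_ne_zero κ
      rw [← hT, h, mul_one]
    intro x y z h
    by_cases hz : z = 0
    · subst hz
      by_cases hy : y = 0
      · subst hy
        simp at h
        exact ⟨h, rfl, rfl⟩
      · exfalso
        apply hno (-x / y)
        have : al y ≠ 0 := fun h => hy (hal0 _ h)
        rw [map_div₀, map_neg, eq_div_iff this]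
        rw [map_zero] at h
        linear_combination h
    · exfalso
      have hz' : al z ≠ 0 := fun h => hz (hal0 _ h)
      have e : T (T 1) = al (-x / z) + al (-y / z) * T 1 := by
        rw [map_div₀, map_div₀, map_neg, map_neg]
        field_simp
        linear_combination h
      set D := φ (T 1) - T 1 with hD
      have hD0 : D ≠ 0 := by
        intro h0
        obtain ⟨κ, hκ⟩ := hfix (T 1) (sub_eq_zero.1 h0)
        exact hno κ hκ
      apply h2 D hD0 (-(-x/z))
      have e2 : φ (T (T 1)) = al (-x / z) + al (-y / z) * φ (T 1) := by
        rw [e, map_add, map_mul, hφal, hφal]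
      have e3 : T (T 1) = φ ω * φ (ρ (T 1)) := hT _
      have e4 : φ (T (T 1)) = φ (φ ω) * φ (φ (ρ (T 1))) := by rw [e3, map_mul]
      have e5 : T 1 = φ ω := by rw [hT]; simp
      rw [hD, map_sub, map_sub, hcomm, map_neg]
      linear_combination (-φ (T 1)) * e + T 1 * e2 - T 1 * e4 + φ (T 1) * e3
        - φ (φ (ρ (T 1))) * φ (φ ω) * e5 + φ (ρ (T 1)) * φ ω * congrArg φ e5
  -- the relation for T^3
  obtain ⟨a, b, c, habc⟩ : ∃ a b c : K, T (T (T 1)) + al (ρK (ρK c)) * T (T 1)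
      + al (ρK b) * T 1 + al a = 0 := by
    have hb := zkw_li3 _ _ _ hli
    have hs := hspan _ hb
    have hmem : T (T (T 1)) ∈ Submodule.span K (Set.range ![1, T 1, T (T 1)]) := by
      rw [hs]; trivial
    rw [Submodule.mem_span_range_iff_exists_fun] at hmem
    obtain ⟨f, hf⟩ := hmem
    simp [Fin.sum_univ_three, Algebra.smul_def] at hf
    refine ⟨-f 0, ρK.symm (-f 1), ρK.symm (ρK.symm (-f 2)), ?_⟩
    simp only [RingEquiv.apply_symm_apply, map_neg]
    rw [← hf]; ring
  obtain ⟨v3, hv3⟩ : ∃ v, v = T 1 + al c := ⟨_, rfl⟩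
  obtain ⟨v2, hv2⟩ : ∃ v, v = T v3 + al b := ⟨_, rfl⟩
  have hTv3 : T v3 = T (T 1) + al (ρK c) * T 1 := by
    rw [hv3, hTadd, ← hTsm, mul_one]
  have hTv2 : T v2 = -al a := by
    have : T (al b) = al (ρK b) * T 1 := by rw [← hTsm, mul_one]
    rw [hv2, hTadd, hTv3, hTadd, hTsm, this]
    linear_combination habc
  have hliv : ∀ x y z : K, al x * 1 + al y * v2 + al z * v3 = 0 →
      x = 0 ∧ y = 0 ∧ z = 0 := by
    intro x y z h
    rw [hv2, hTv3, hv3] at h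
    obtain ⟨k1, k2, k3⟩ := hli (x + y * b + z * c) (y * ρK c + z) y (by
      simp only [map_add, map_mul]
      linear_combination h)
    subst k3
    simp at k2
    subst k2
    simp at k1
    exact ⟨k1, rfl, rfl⟩
  have ha : al a ≠ 0 := by
    intro h
    rw [h, neg_zero] at hTv2
    have := hT0 _ hTv2
    have := (hliv 0 1 0 (by simp [this])).2.1
    exact one_ne_zero this
  obtain ⟨E, hE⟩ : ∃ E : L → L → L, ∀ A C, E A C = A * φ C - φ A * C := ⟨_, fun _ _ => rfl⟩
  obtain ⟨B, hB⟩ : ∃ B : L → L → L, ∀ A C, B A C = A * C - β * (φ A * φ (φ C)) :=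
    ⟨_, fun _ _ => rfl⟩
  have hBT : ∀ A y, B A (T y) = φ ω * E A (ρ y) := by
    intro A y
    rw [hB, hE, hT]
    simp only [map_mul, hφ3]
    linear_combination (-φ A * ρ y) * hβ
  have hBaddr : ∀ A x y, B A (x + y) = B A x + B A y := by
    intro A x y; simp only [hB, map_add]; ring
  have hBsmr : ∀ A (x : K) y, B A (al x * y) = al x * B A y := by
    intro A x y; simp only [hB, map_mul, hφal]; ring
  have hBaddl : ∀ x y A, B (x + y) A = B x A + B y A := by
    intro A x y; simp only [hB, map_add]; ring
  have hBsml : ∀ (x : K) y A, B (al x * y) A = al x * B y A := by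
    intro A x y; simp only [hB, map_mul, hφal]; ring
  have hEa : ∀ A, E A A = 0 := by intro A; rw [hE]; ring
  have hEs : ∀ A C, E A C = - E C A := by intro A C; rw [hE, hE]; ring
  have hliA : ∀ x y z : K, al x * 1 + al y * ρ v2 + al z * ρ v3 = 0 →
      x = 0 ∧ y = 0 ∧ z = 0 := by
    intro x y z h
    obtain ⟨k1, k2, k3⟩ := hliv (ρK.symm x) (ρK.symm y) (ρK.symm z) (by
      apply ρ.injective
      simp only [map_add, map_mul, hρ, RingEquiv.apply_symm_apply, map_one, map_zero]
      exact h)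
    simp at k1 k2 k3
    exact ⟨k1, k2, k3⟩
  have hliE : ∀ x y z : K, al x * E 1 (ρ v2) + al y * E (ρ v2) (ρ v3) + al z * E (ρ v3) 1 = 0 →
      x = 0 ∧ y = 0 ∧ z = 0 := by
    generalize ρ v2 = A2 at *
    generalize ρ v3 = A3 at *
    intro x y z h
    simp only [hE, map_one] at h
    by_cases hx : x = 0
    · subst hx
      rw [map_zero] at h
      have hA3 : A3 ≠ 0 := by
        rintro rfl
        exact one_ne_zero (hliA 0 0 1 (by simp)).2.2
      obtain ⟨κ, hκ⟩ := zkw_alt φ hfix A3 (al y * A2 + al (-z) * 1) hA3 (by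
        simp only [map_add, map_mul, hφal, map_neg, map_one]
        linear_combination -h)
      obtain ⟨k1, k2, k3⟩ := hliA (-z) y (-κ) (by
        rw [map_neg al κ]; rw [← hal] at hκ; linear_combination hκ)
      exact ⟨rfl, k2, neg_eq_zero.1 k1⟩
    · exfalso
      have hne : al x * 1 + al (-y) * A3 ≠ 0 := by
        intro h0
        exact hx (hliA x 0 (-y) (by simp only [map_zero]; linear_combination h0)).1
      obtain ⟨κ, hκ⟩ := zkw_alt φ hfix (al x * 1 + al (-y) * A3) (al x * A2 + al (-z) * A3) hne (by
        simp only [map_add, map_mul, hφal, map_neg, map_one]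
        linear_combination al x * h)
      obtain ⟨k1, k2, k3⟩ := hliA (-κ * x) x (-z + κ * y) (by
        rw [← hal] at hκ
        simp only [map_add, map_mul, map_neg] at hκ ⊢
        linear_combination hκ)
      exact hx k2
  have hB1 : ∀ A, al a * B A 1 = - (φ ω * E A (ρ v2)) := by
    intro A
    have : B A (al (-a) * 1) = φ ω * E A (ρ v2) := by
      rw [← hBT, hTv2, map_neg, mul_one]
    rw [hBsmr, map_neg] at this
    linear_combination -this
  have hB2 : ∀ A, B A v2 = φ ω * E A (ρ v3) + al b * B A 1 := by
    intro A
    rw [hv2, hBaddr, hBT, ← hBsmr, mul_one]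
  have hB3 : ∀ A, B A v3 = φ ω * E A 1 + al c * B A 1 := by
    intro A
    rw [← map_one ρ, ← hBT, hv3, hBaddr, ← hBsmr, map_one, mul_one]
  have hφω : φ ω ≠ 0 := by simpa using hω0
  have b11 := hB1 1
  have b21 := hB1 (ρ v2)
  have b31 := hB1 (ρ v3)
  have b12 := hB2 1
  have b22 := hB2 (ρ v2)
  have b32 := hB2 (ρ v3)
  have b13 := hB3 1
  have b23 := hB3 (ρ v2)
  have b33 := hB3 (ρ v3)
  rw [hEa] at b21 b32 b13
  rw [hEs (ρ v3) (ρ v2)] at b31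
  rw [hEs 1 (ρ v3)] at b12
  rw [hEs (ρ v2) 1] at b23
  have hliu : LinearIndependent K ![B 1 1, B (ρ v3) 1, B (ρ v3) v3] := by
    apply zkw_li3
    intro x y z h
    obtain ⟨k1, k2, k3⟩ := hliE (-x) (y + z * c) (z * a) (by
      apply mul_left_cancel₀ hφω
      simp only [map_add, map_mul, map_neg]
      rw [← hal] at h
      linear_combination al a * h - al x * b11 - al y * b31 - al z * al a * b33 - al z * al c * b31)
    have hz : z = 0 := by
      rcases mul_eq_zero.1 k3 with h | h
      · exact h
      · rw [h, map_zero] at ha; exact absurd rfl ha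
    subst hz
    simp at k1 k2
    exact ⟨k1, k2, rfl⟩
  have hlv : LinearIndependent K ![1, v2, v3] := zkw_li3 _ _ _ hliv
  refine ⟨a, b, c, ![1, v2, v3], ![B 1 1, B (ρ v3) 1, B (ρ v3) v3], ⟨hlv, hspan _ hlv⟩,
    ⟨hliu, hspan _ hliu⟩, ?_⟩
  intro x y z
  simp only [Matrix.cons_val_zero, Matrix.cons_val_one, Matrix.cons_val, Algebra.smul_def]
  rw [← hal, ← hB]
  simp only [map_add, map_mul, map_sub, hρ, map_one ρ, hBaddl, hBaddr, hBsml, hBsmr]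
  have b21' : B (ρ v2) 1 = 0 := by
    rw [mul_zero, neg_zero] at b21
    exact (mul_eq_zero.1 b21).resolve_left ha
  rw [b12, b22, b32, b13, b23, b21', b33]
  linear_combination (-al (ρK y) * al y) * b31 - (al (ρK y) * al z) * b11

/-- ZKW case: every Zha–Kyureghyan–Wang planar function
`F_{r,ω}(X) = X^{r+1} - ω^{q-1} X^{qr+q²}` on `F_{q^3}` (with `m/d` odd and
`m/d + k/d ≡ 0 (mod 3)`, `d = gcd(k,m)`, `r = p^k`, `ω` a generator of
`F_{q^3}^×`) is `GL(3,q)`-equivalent to a member of the family of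
Theorem 1.4 with `σ = r`. -/
theorem stmt9 {p m k : ℕ} (hp : p.Prime) (hm : 0 < m)
    (hodd : Odd (m / Nat.gcd k m))
    (h3 : (m / Nat.gcd k m + k / Nat.gcd k m) % 3 = 0)
    {K L : Type*} [Field K] [Fintype K] (hK : Fintype.card K = p ^ m)
    [Field L] [Algebra K L] (hL : Module.finrank K L = 3)
    (ω : Lˣ) (hω : ∀ x : Lˣ, x ∈ Subgroup.zpowers ω) :
    ∃ (a b c : K) (v u : Fin 3 → L),
      (LinearIndependent K v ∧ Submodule.span K (Set.range v) = ⊤) ∧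
      (LinearIndependent K u ∧ Submodule.span K (Set.range u) = ⊤) ∧
      ∀ x y z : K,
        (x • v 0 + y • v 1 + z • v 2) ^ (p ^ k + 1) -
            (ω : L) ^ (p ^ m - 1) *
              (x • v 0 + y • v 1 + z • v 2) ^ (p ^ (m + k) + p ^ (2 * m)) =
          (x ^ (p ^ k + 1) + a * y ^ p ^ k * z + b * x ^ p ^ k * y
              + c * x ^ p ^ k * z) • u 0 +
          (a * y ^ (p ^ k + 1) + z ^ p ^ k * x + b * z ^ p ^ k * y
              + c * x ^ p ^ k * y) • u 1 +
          (z ^ (p ^ k + 1) - x ^ p ^ k * y) • u 2 := by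
  have hfp : Fact p.Prime := ⟨hp⟩
  have hq : 1 < p ^ m := Nat.one_lt_pow hm.ne' hp.one_lt
  have : FiniteDimensional K L := Module.finite_of_finrank_pos (by omega)
  have : Finite L := Module.finite_of_finite K
  have : Fintype L := Fintype.ofFinite L
  have hcL : Fintype.card L = (p ^ m) ^ 3 := by
    rw [Module.card_eq_pow_finrank (K := K), hL, hK]
  have hchK : CharP K p := by
    have := CharP.exists K
    obtain ⟨p', hp'⟩ := this
    obtain ⟨n, hn1, hn2⟩ := FiniteField.card K p'
    rw [hK] at hn2
    have h1 : p ∣ p' := hp.dvd_of_dvd_pow (hn2 ▸ dvd_pow_self p hm.ne')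
    rw [(Nat.prime_dvd_prime_iff_eq hp hn1).1 h1]
    exact hp'
  have hchL : CharP L p := charP_of_injective_algebraMap (algebraMap K L).injective p
  let φ : L →ₐ[K] L := FiniteField.frobeniusAlgHom K L
  have hφ : ∀ y, φ y = y ^ p ^ m := by
    intro y; rw [← hK]; rfl
  let ρ : L →+* L := iterateFrobenius L p k
  have hρ : ∀ y, ρ y = y ^ p ^ k := fun y => rfl
  let ρK : K ≃+* K := iterateFrobeniusEquiv K p k
  have hρK : ∀ y, ρK y = y ^ p ^ k := fun y => rfl
  have hω1 : (ω : L) ≠ 0 := ω.ne_zero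
  obtain ⟨a, b, c, v, u, hv, hu, h⟩ := zkw_main hL φ
    (fun y hy => zkw_fixed y (by rw [hφ, ← hK] at hy; exact hy))
    (fun y => by
      simp only [hφ]
      rw [← pow_mul, ← pow_mul]
      have := FiniteField.pow_card y
      rw [hcL] at this
      rw [← pow_two, ← pow_succ']; exact this)
    ρ ρK (fun x => by rw [hρ, hρK, map_pow]) (fun y => by
      rw [hρ, hφ, hφ, hρ, ← pow_mul, ← pow_mul, mul_comm]) ω hω1
    (fun y hy κ hk => by
      apply zkw_nonpower hp hm h3 hK hcL ω hω (p ^ m) (Or.inl rfl) y hy κ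
      rw [← hk, hφ, hφ, hρ, ← pow_mul, ← pow_add, add_comm k m])
    (fun y hy κ hk => by
      apply zkw_nonpower hp hm h3 hK hcL ω hω (p ^ m + (p ^ m) ^ 2) (Or.inr rfl) y hy κ
      rw [← hk, hφ, hφ, hφ, hρ]
      ring)
    ((ω : L) ^ (p ^ m - 1)) (by rw [hφ, ← pow_succ, Nat.sub_add_cancel hq.le])
  refine ⟨a, b, c, v, u, hv, hu, fun x y z => ?_⟩
  have h' := h x y z
  generalize x • v 0 + y • v 1 + z • v 2 = X at h' ⊢
  have e1 : X ^ (p ^ k + 1) = ρ X * X := by rw [hρ, pow_succ]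
  have e2 : X ^ (p ^ (m + k) + p ^ (2 * m)) = φ (ρ X) * φ (φ X) := by
    rw [hφ, hφ, hφ, hρ, ← pow_mul, ← pow_mul, ← pow_add p, ← pow_add p, ← pow_add,
      add_comm k m, two_mul]
  rw [e1, e2, h']
  simp only [hρK, pow_succ]
end

section
/- Let q = p^m, r = p^k, d = gcd(k,m), and suppose m/d is odd and m/d + k/d ≡ 0 (mod 3). Let H = {x^{r−q²} : x ∈ F_{q^3}^×} be the subgroup of (r−q²)-th powers of F_{q^3}^× (equivalently, of (qr−1)-th powers, since gcd(qr−1, q³−1) = gcd(r−q², q³−1)). Then for every generator ω′ of the cyclic group F_{q^3}^×, there exists ω ∈ ω′·H such that {1, ω, ω^{qr+1}} is linearly independent over F_q (hence an F_q-basis of F_{q^3}). -/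
/-- Reindexing the exponents of the norm. -/
theorem aux_sum (A n s : ℕ) (hA : 0 < A) (hn : 0 < n) (hc : Nat.Coprime n s) :
    (∑ i ∈ Finset.range n, (A ^ s) ^ i) ≡ (∑ i ∈ Finset.range n, A ^ i) [MOD A ^ n - 1] := by
  have h1 : A ^ n ≡ 1 [MOD A ^ n - 1] :=
    ((Nat.modEq_iff_dvd' (Nat.one_le_pow _ _ hA)).2 dvd_rfl).symm
  have himg : (Finset.range n).image (fun i => s * i % n) = Finset.range n := by
    apply Finset.eq_of_subset_of_card_le
    · intro j hj
      obtain ⟨i, -, rfl⟩ := Finset.mem_image.1 hj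
      exact Finset.mem_range.2 (Nat.mod_lt _ hn)
    · rw [Finset.card_image_of_injOn]
      intro i hi j hj hij
      have hi' := Finset.mem_range.1 (Finset.mem_coe.1 hi)
      have hj' := Finset.mem_range.1 (Finset.mem_coe.1 hj)
      have : i ≡ j [MOD n] := Nat.ModEq.cancel_left_of_coprime hc hij
      exact Nat.ModEq.eq_of_lt_of_lt this hi' hj'
  have hinj : Set.InjOn (fun i => s * i % n) (Finset.range n : Set ℕ) := by
    rw [← Finset.card_image_iff, himg]
  have hsum : (∑ i ∈ Finset.range n, A ^ i) = ∑ i ∈ Finset.range n, A ^ (s * i % n) := by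
    conv_lhs => rw [← himg]
    rw [Finset.sum_image hinj]
  rw [hsum]
  apply Nat.ModEq.sum
  intro i _
  rw [← pow_mul]
  conv_lhs => rw [← Nat.mod_add_div (s * i) n, pow_add, pow_mul]
  simpa using (Nat.ModEq.refl (A ^ (s * i % n))).mul (h1.pow (s * i / n))

/-- If multiplication by `g` preserves the span of `1, x`, then `g` lies in the base field. -/
theorem aux_deg {K L : Type*} [Field K] [Field L] [Algebra K L]
    (hL : Module.finrank K L = 3) (g x : L) (a b c e : K)
    (h1 : g = algebraMap K L a * x + algebraMap K L b)
    (h2 : x * g = algebraMap K L c * x + algebraMap K L e) :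
    ∃ t : K, g = algebraMap K L t := by
  by_cases ha : a = 0
  · exact ⟨b, by simpa [ha] using h1⟩
  have : FiniteDimensional K L := FiniteDimensional.of_finrank_pos (by omega)
  have hint : IsIntegral K g := Algebra.IsIntegral.isIntegral g
  have hdvd : (minpoly K g).natDegree ∣ 3 := hL ▸ minpoly.degree_dvd hint
  have hle : (minpoly K g).natDegree ≤ 2 := by
    have hq : (Polynomial.aeval g) (Polynomial.X ^ 2 - Polynomial.C (b + c) * Polynomial.X
        - Polynomial.C (e * a - c * b)) = 0 := by
      simp
      have ha' : algebraMap K L a * x = g - algebraMap K L b := by rw [h1]; ring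
      linear_combination (-g + algebraMap K L c) * ha' + algebraMap K L a * h2
    have hdeg : (Polynomial.X ^ 2 - Polynomial.C (b + c) * Polynomial.X
        - Polynomial.C (e * a - c * b) : Polynomial K).natDegree = 2 := by
      compute_degree!
    have hne : (Polynomial.X ^ 2 - Polynomial.C (b + c) * Polynomial.X
        - Polynomial.C (e * a - c * b) : Polynomial K) ≠ 0 := by
      intro h; rw [h] at hdeg; simp at hdeg
    have := Polynomial.natDegree_le_of_dvd (minpoly.dvd K g hq) hne
    omega
  have h1' : (minpoly K g).natDegree = 1 := by
    rcases (Nat.dvd_prime Nat.prime_three).1 hdvd with h | h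
    · exact h
    · omega
  obtain ⟨t, ht⟩ := minpoly.natDegree_eq_one_iff.1 h1'
  exact ⟨t, ht.symm⟩

set_option maxHeartbeats 1000000 in
theorem aux_main {p m k : ℕ} (hp : p.Prime) (hm : 0 < m)
    (h3 : (m / Nat.gcd k m + k / Nat.gcd k m) % 3 = 0)
    {K L : Type*} [Field K] [Fintype K] (hK : Fintype.card K = p ^ m)
    [Field L] [Algebra K L] (hL : Module.finrank K L = 3)
    (w : Lˣ) (hw : ∀ x : Lˣ, x ∈ Subgroup.zpowers w) :
    LinearIndependent K ![(1 : L), (w : L), (w : L) ^ (p ^ m * p ^ k + 1)] := by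
  have : Fact p.Prime := ⟨hp⟩
  have : CharP K p := charP_of_card_eq_prime_pow hK
  have : CharP L p := charP_of_injective_algebraMap (algebraMap K L).injective p
  have : FiniteDimensional K L := FiniteDimensional.of_finrank_pos (by omega)
  have : Finite L := Module.finite_of_finite K
  have : Fintype L := Fintype.ofFinite L
  have hcL : Fintype.card L = (p ^ m) ^ 3 := by
    rw [Module.card_eq_pow_finrank (K := K), hK, hL]
  have hord : orderOf w = (p ^ m) ^ 3 - 1 := by
    rw [orderOf_eq_card_of_forall_mem_zpowers hw, Nat.card_units, Nat.card_eq_fintype_card, hcL]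
  -- arithmetic
  have hdpos : 0 < Nat.gcd k m := Nat.gcd_pos_of_pos_right _ hm
  have hcop0 := Nat.coprime_div_gcd_div_gcd hdpos
  obtain ⟨d, hd⟩ : ∃ d, d = Nat.gcd k m := ⟨_, rfl⟩
  have hkd : k = d * (k / d) := (Nat.mul_div_cancel' (hd ▸ Nat.gcd_dvd_left k m)).symm
  have hmd : m = d * (m / d) := (Nat.mul_div_cancel' (hd ▸ Nat.gcd_dvd_right k m)).symm
  rw [← hd] at h3 hcop0 hdpos
  obtain ⟨n, hn⟩ : ∃ n, n = m / d := ⟨_, rfl⟩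
  obtain ⟨l, hl⟩ : ∃ l, l = k / d := ⟨_, rfl⟩
  rw [← hn, ← hl] at h3 hcop0
  rw [← hn] at hmd
  rw [← hl] at hkd
  have hnpos : 0 < n := by
    rcases Nat.eq_zero_or_pos n with h | h
    · rw [h] at hmd; omega
    · exact h
  obtain ⟨s, hs⟩ : ∃ s, n + l = 3 * s := ⟨(n + l) / 3, by omega⟩
  have hcop : Nat.Coprime n s := by
    have : Nat.Coprime n (n + l) := by simpa using hcop0.symm
    rw [hs] at this
    exact Nat.Coprime.coprime_mul_left_right this
  have he : m + k = d * 3 * s := by rw [hmd, hkd, ← mul_add, hs, mul_assoc]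
  set x : L := (w : L) with hx
  set R : ℕ := p ^ (m + k) with hR
  have hRA : R = ((p ^ d) ^ 3) ^ s := by rw [hR, he, ← pow_mul, ← pow_mul, mul_assoc]
  have hqA : (p ^ m) ^ 3 = ((p ^ d) ^ 3) ^ n := by
    rw [hmd, ← pow_mul, ← pow_mul, ← pow_mul]; congr 1; ring
  have hfrob : ∀ u v : L, (u + v) ^ R = u ^ R + v ^ R := fun u v => add_pow_char_pow u v p (m + k)
  have hPn : ∀ y : L, y ^ (R ^ n) = y := by
    intro y
    have : R ^ n = (Fintype.card L) ^ s := by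
      rw [hcL, hqA, hRA, ← pow_mul _ s n, ← pow_mul _ n s, mul_comm s n]
    rw [this]
    exact FiniteField.pow_card_pow s y
  set T : ℕ → ℕ := fun i => ∑ j ∈ Finset.range i, R ^ j with hT
  have hT1 : ∀ i, T (i + 1) = T i * R + 1 := by
    intro i
    simp only [hT]
    rw [Finset.sum_range_succ', Finset.sum_mul]
    simp [pow_succ]
  have hT2 : x ^ (T (n + 1)) = x * x ^ T n := by
    simp only [hT]
    rw [Finset.sum_range_succ, pow_add, hPn, mul_comm]
  -- the norm is not in K
  have hnot : ¬ ∃ t : K, x ^ T n = algebraMap K L t := by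
    rintro ⟨t, ht⟩
    have hq : (x ^ T n) ^ (p ^ m) = x ^ T n := by
      rw [ht, ← map_pow, ← hK, FiniteField.pow_card]
    have hr : (x ^ T n) ^ R = x ^ T n := by
      have h := hT2
      rw [hT1, pow_succ, pow_mul, mul_comm] at h
      exact mul_left_cancel₀ w.ne_zero h
    have hk : (x ^ T n) ^ (p ^ k) = x ^ T n := by
      rw [hR, pow_add, pow_mul, hq] at hr
      exact hr
    have hit : ∀ i (y : L), (fun y : L => y ^ p)^[i] y = y ^ p ^ i := by
      intro i y
      exact congrFun (pow_iterate p i) y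
    have hgcd : (x ^ T n) ^ (p ^ d) = x ^ T n := by
      have ha : Function.IsPeriodicPt (fun y : L => y ^ p) m (x ^ T n) := by
        unfold Function.IsPeriodicPt Function.IsFixedPt; rw [hit]; exact hq
      have hb : Function.IsPeriodicPt (fun y : L => y ^ p) k (x ^ T n) := by
        unfold Function.IsPeriodicPt Function.IsFixedPt; rw [hit]; exact hk
      have hc := hb.gcd ha
      unfold Function.IsPeriodicPt Function.IsFixedPt at hc
      rw [hit, ← hd] at hc
      exact hc
    have hwT : w ^ T n = w ^ (∑ i ∈ Finset.range n, ((p ^ d) ^ 3) ^ i) := by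
      rw [pow_eq_pow_iff_modEq, hord, hqA]
      simp only [hT, hRA]
      exact aux_sum _ n s (by have := hp.pos; positivity) hnpos hcop
    have hgcdw : (w ^ T n) ^ (p ^ d) = w ^ T n := by
      apply Units.ext
      push_cast
      exact hgcd
    set Q := p ^ d with hQ
    have hQ2 : 2 ≤ Q := by
      calc 2 ≤ p := hp.two_le
        _ = p ^ 1 := (pow_one p).symm
        _ ≤ p ^ d := Nat.pow_le_pow_right hp.pos hdpos
    set S := ∑ i ∈ Finset.range n, (Q ^ 3) ^ i with hS
    have hSpos : 0 < S := Finset.sum_pos (fun i _ => by positivity) ⟨0, by simpa using hnpos⟩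
    have hgeom : (Q ^ 3 - 1) * S = (Q ^ 3) ^ n - 1 := by
      have h1 : 1 ≤ Q ^ 3 := Nat.one_le_pow _ _ (by omega)
      have h2 : 1 ≤ (Q ^ 3) ^ n := Nat.one_le_pow _ _ (by omega)
      zify [h1, h2]
      rw [hS]
      push_cast
      exact mul_geom_sum _ _
    rw [hwT, ← pow_mul] at hgcdw
    have hone : w ^ (S * (Q - 1)) = 1 := by
      have : S * Q = S * (Q - 1) + S := by
        rw [← Nat.mul_succ]
        congr 1
        omega
      rw [this, pow_add] at hgcdw
      simpa using hgcdw
    have hdvd := orderOf_dvd_of_pow_eq_one hone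
    rw [hord, hqA, ← hgeom] at hdvd
    have hle := Nat.le_of_dvd (Nat.mul_pos hSpos (by omega)) hdvd
    have hlt : Q - 1 < Q ^ 3 - 1 := by
      have : Q < Q ^ 3 := by nlinarith [Nat.mul_le_mul hQ2 hQ2]
      omega
    have hlt' := Nat.mul_lt_mul_of_pos_left hlt hSpos
    rw [mul_comm] at hle
    omega
  have hexp : x ^ (p ^ m * p ^ k + 1) = x * x ^ R := by
    rw [← pow_add, pow_succ, mul_comm]
  rw [Fintype.linearIndependent_iff]
  intro c hc
  rw [Fin.sum_univ_three] at hc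
  change c 0 • (1 : L) + c 1 • x + c 2 • x ^ (p ^ m * p ^ k + 1) = 0 at hc
  simp only [Algebra.smul_def, mul_one] at hc
  rw [hexp] at hc
  clear_value R
  have hc2 : c 2 = 0 := by
    by_contra h2
    apply hnot
    have h2' : algebraMap K L (c 2) ≠ 0 := by simpa using h2
    -- all partial norms lie in the span of 1, x
    have hrel : x * x ^ R = algebraMap K L (-(c 1) / c 2) * x + algebraMap K L (-(c 0) / c 2) := by
      simp only [map_div₀, map_neg]
      field_simp
      linear_combination hc
    have hspan : ∀ i, ∃ a b : K, x ^ T i = algebraMap K L a * x + algebraMap K L b := by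
      intro i
      induction i with
      | zero => exact ⟨0, 1, by simp [hT]⟩
      | succ i ih =>
        obtain ⟨a, b, hab⟩ := ih
        refine ⟨a ^ R * (-(c 1) / c 2) + b ^ R, a ^ R * (-(c 0) / c 2), ?_⟩
        rw [hT1, pow_succ, pow_mul, hab, hfrob, mul_pow]
        simp only [map_add, map_mul, map_pow]
        linear_combination (algebraMap K L a) ^ R * hrel
    obtain ⟨a, b, hab⟩ := hspan n
    obtain ⟨a', b', hab'⟩ := hspan (n + 1)
    rw [hT2] at hab'
    exact aux_deg hL _ x a b a' b' hab hab'
  have hc1 : c 1 = 0 := by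
    by_contra h1
    apply hnot
    have h1' : algebraMap K L (c 1) ≠ 0 := by simpa using h1
    have hxK : x = algebraMap K L (-(c 0) / c 1) := by
      simp only [map_div₀, map_neg]
      field_simp
      simp only [hc2, map_zero, zero_mul, add_zero] at hc
      linear_combination hc
    exact ⟨(-(c 0) / c 1) ^ T n, by rw [map_pow, ← hxK]⟩
  have hc0 : c 0 = 0 := by
    simpa [hc1, hc2] using hc
  intro i
  fin_cases i
  · exact hc0
  · exact hc1
  · exact hc2


/-- under the ZKW conditions, for every generator `ω'` of
`F_{q^3}^×` there is an element `ω` in the coset `ω'·H` of the subgroup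
`H = {x^{r-q²}}` such that `{1, ω, ω^{qr+1}}` is linearly independent over
`F_q` (hence an `F_q`-basis of `F_{q^3}`). -/
theorem stmt11 {p m k : ℕ} (hp : p.Prime) (hm : 0 < m)
    (hodd : Odd (m / Nat.gcd k m))
    (h3 : (m / Nat.gcd k m + k / Nat.gcd k m) % 3 = 0)
    {K L : Type*} [Field K] [Fintype K] (hK : Fintype.card K = p ^ m)
    [Field L] [Algebra K L] (hL : Module.finrank K L = 3)
    (ω' : Lˣ) (hω' : ∀ x : Lˣ, x ∈ Subgroup.zpowers ω') :
    ∃ h : Lˣ, (∃ x : Lˣ, h = x ^ ((p ^ k : ℤ) - (p ^ (2 * m) : ℤ))) ∧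
      LinearIndependent K
        ![(1 : L), ((ω' * h : Lˣ) : L), (((ω' * h : Lˣ) : L)) ^ (p ^ m * p ^ k + 1)] := by
  refine ⟨1, ⟨1, by simp⟩, ?_⟩
  rw [mul_one]
  exact aux_main hp hm h3 hK hL ω' hω'
end

section
/- Let q = p^m, σ = p^k, d = gcd(k,m), τ = p^d, and let a_0,…,a_n ∈ F_q with a_0 ≠ 0 and a_n ≠ 0. Define P_σ(x) = Σ_{i=0}^{n} a_i·x^{(σ^i−1)/(σ−1)} ∈ F_q[x]. Let ξ_1,…,ξ_{τ−1} ∈ F_q^× be a system of representatives of the cosets of the subgroup (F_q^×)^{(τ−1)} of (τ−1)-th powers in F_q^×, and for each j define A_j(x) = Σ_{i=0}^{n} a_i·ξ_j^{(σ^i−1)/(σ−1)}·x^{σ^i} ∈ F_q[x]. Then the number N_q(P_σ) of distinct roots of P_σ in F_q satisfies N_q(P_σ) = Σ_{j=1}^{τ−1} (N_q(A_j) − 1)/(τ−1), where N_q(A_j) denotes the number of distinct roots of A_j in F_q. -/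
open Classical in
theorem aux_fiber {G : Type*} [CommGroup G] [IsCyclic G] [Fintype G] (s : ℕ) (z0 : G) :
    (Finset.univ.filter (fun z : G => z ^ s = z0 ^ s)).card = (Nat.card G).gcd s := by
  rw [← IsCyclic.card_powMonoidHom_ker (G := G) s, Nat.card_eq_fintype_card, Fintype.card_subtype]
  refine Finset.card_bij (fun z _ => z / z0) ?_ ?_ ?_
  · intro z hz
    simp only [Finset.mem_filter, Finset.mem_univ, true_and] at hz
    simp [MonoidHom.mem_ker, div_pow, hz]
  · intro a _ b _ h
    simpa using h
  · intro b hb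
    simp only [Finset.mem_filter, Finset.mem_univ, true_and, MonoidHom.mem_ker,
      powMonoidHom_apply] at hb
    exact ⟨b * z0, by simp [mul_pow, hb], by simp⟩

open Classical in
theorem aux_count {G : Type*} [CommGroup G] [IsCyclic G] [Fintype G] {ι : Type*} [Fintype ι]
    (g s : ℕ) (hg : (Nat.card G).gcd s = g) (ξ : ι → G)
    (hξ : ∀ y : G, ∃! j, ∃ t : G, y = ξ j * t ^ g) (Q : G → Prop) :
    ∑ j, (Finset.univ.filter (fun z : G => Q (ξ j * z ^ s))).card
      = g * (Finset.univ.filter (fun x : G => Q x)).card := by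
  have h1 : ∀ j, (Finset.univ.filter (fun z : G => Q (ξ j * z ^ s))).card
      = ∑ x ∈ Finset.univ.filter (fun x : G => Q x),
          (Finset.univ.filter (fun z : G => ξ j * z ^ s = x)).card := by
    intro j
    rw [Finset.card_eq_sum_card_fiberwise (f := fun z => ξ j * z ^ s)
      (t := Finset.univ.filter (fun x : G => Q x))]
    · refine Finset.sum_congr rfl fun x hx => ?_
      congr 1
      ext z
      simp only [Finset.mem_filter, Finset.mem_univ, true_and] at hx ⊢
      constructor
      · exact fun h => h.2
      · exact fun h => ⟨h ▸ hx, h⟩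
    · intro z hz
      simpa using hz
  simp_rw [h1]
  rw [Finset.sum_comm, Finset.sum_const_nat (m := g), mul_comm]
  intro x _
  obtain ⟨j, ⟨t, ht⟩, huniq⟩ := hξ x
  have hdvd : g ∣ s := hg ▸ Nat.gcd_dvd_right _ _
  rw [Finset.sum_eq_single j]
  · have hz0 : ∃ z0 : G, t ^ g = z0 ^ s := by
      refine ⟨t ^ (Nat.gcdB (Nat.card G) s), ?_⟩
      have hb := Nat.gcd_eq_gcd_ab (Nat.card G) s
      rw [hg] at hb
      rw [← zpow_natCast t g, hb, zpow_add, zpow_mul, zpow_natCast, pow_card_eq_one', one_zpow,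
        one_mul, mul_comm, zpow_mul, zpow_natCast]
    obtain ⟨z0, hz0⟩ := hz0
    rw [← hg, ← aux_fiber s z0]
    congr 1
    ext z
    simp [ht, hz0]
  · intro j2 _ hne
    rw [Finset.card_eq_zero, Finset.filter_eq_empty_iff]
    intro z _ hz
    obtain ⟨c, hc⟩ := hdvd
    refine hne (huniq j2 ⟨z ^ c, ?_⟩)
    rw [← hz, hc, mul_comm g c, pow_mul]
  · simp

theorem aux_units {K : Type*} [Field K] [Fintype K] [DecidableEq K] (Q : K → Prop)
    [DecidablePred Q] (h : ¬ Q 0) :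
    {x : K | Q x}.ncard = (Finset.univ.filter (fun x : Kˣ => Q x)).card := by
  rw [← Set.ncard_coe_finset, ← Set.ncard_image_of_injective _ (Units.val_injective (α := K))]
  congr 1
  ext x
  simp only [Set.mem_ofPred_eq, Finset.coe_filter, Finset.mem_univ, true_and, Set.mem_image]
  constructor
  · intro hx
    have h0 : x ≠ 0 := fun hx0 => h (hx0 ▸ hx)
    exact ⟨Units.mk0 x h0, hx, rfl⟩
  · rintro ⟨u, hu, rfl⟩
    exact hu

/-- with `τ = p^{gcd(k,m)}`, a system of representatives
`ξ_j` of `F_q^×/(F_q^×)^{τ-1}`, `P_σ(x) = Σ a_i x^{(σ^i-1)/(σ-1)}` and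
`A_j(x) = Σ a_i ξ_j^{(σ^i-1)/(σ-1)} x^{σ^i}`, the number of distinct roots of
`P_σ` in `F_q` equals `Σ_j (N_q(A_j) - 1)/(τ - 1)`. -/
theorem stmt12 {p m k n : ℕ} (hp : p.Prime) (hm : 0 < m)
    {K : Type*} [Field K] [Fintype K] (hK : Fintype.card K = p ^ m)
    (a : ℕ → K) (ha0 : a 0 ≠ 0) (han : a n ≠ 0)
    (ξ : Fin (p ^ Nat.gcd k m - 1) → K) (hξ0 : ∀ j, ξ j ≠ 0)
    (hξ : ∀ y : K, y ≠ 0 →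
      ∃! j : Fin (p ^ Nat.gcd k m - 1),
        ∃ t : K, t ≠ 0 ∧ y = ξ j * t ^ (p ^ Nat.gcd k m - 1)) :
    (({x : K | ∑ i ∈ Finset.range (n + 1),
        a i * x ^ (∑ l ∈ Finset.range i, (p ^ k) ^ l) = 0}.ncard : ℚ)) =
      ∑ j : Fin (p ^ Nat.gcd k m - 1),
        (({x : K | ∑ i ∈ Finset.range (n + 1),
            a i * (ξ j) ^ (∑ l ∈ Finset.range i, (p ^ k) ^ l) * x ^ (p ^ k) ^ i = 0}.ncard : ℚ) - 1)
          / ((p : ℚ) ^ Nat.gcd k m - 1) := by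
  classical
  have hd : Nat.gcd k m ≠ 0 := (Nat.gcd_pos_of_pos_right k hm).ne'
  have hpk : 1 ≤ p ^ k := Nat.one_le_pow _ _ hp.pos
  have hτ : 1 < p ^ Nat.gcd k m := Nat.one_lt_pow hd hp.one_lt
  have hτQ : ((p : ℚ) ^ Nat.gcd k m - 1) = ((p ^ Nat.gcd k m - 1 : ℕ) : ℚ) := by
    rw [Nat.cast_sub hτ.le]; push_cast; ring
  have hτ0 : ((p ^ Nat.gcd k m - 1 : ℕ) : ℚ) ≠ 0 := by
    have : p ^ Nat.gcd k m - 1 ≠ 0 := by omega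
    exact_mod_cast this
  have hg : (Nat.card Kˣ).gcd (p ^ k - 1) = p ^ Nat.gcd k m - 1 := by
    rw [Nat.card_eq_fintype_card, Fintype.card_units, hK, Nat.gcd_comm,
      Nat.pow_sub_one_gcd_pow_sub_one]
  let P : K → K := fun x => ∑ i ∈ Finset.range (n + 1),
        a i * x ^ (∑ l ∈ Finset.range i, (p ^ k) ^ l)
  have hP0 : P 0 = a 0 := by
    simp only [P]
    rw [Finset.sum_eq_single 0]
    · simp
    · intro i _ hi
      have : ∑ l ∈ Finset.range i, (p ^ k) ^ l ≠ 0 := by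
        have := Finset.single_le_sum (f := fun l => (p ^ k) ^ l) (s := Finset.range i)
          (fun _ _ => Nat.zero_le _) (Finset.mem_range.2 (Nat.pos_of_ne_zero hi))
        simp only [pow_zero] at this
        omega
      rw [zero_pow this, mul_zero]
    · simp
  have hA : ∀ (c z : K), ∑ i ∈ Finset.range (n + 1),
      a i * c ^ (∑ l ∈ Finset.range i, (p ^ k) ^ l) * z ^ (p ^ k) ^ i
        = P (c * z ^ (p ^ k - 1)) * z := by
    intro c z
    simp only [P, Finset.sum_mul]
    refine Finset.sum_congr rfl fun i _ => ?_
    have h := geom_sum_mul_add (p ^ k - 1) i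
    rw [Nat.sub_add_cancel hpk] at h
    have h2 : z ^ (p ^ k) ^ i
        = (z ^ (p ^ k - 1)) ^ (∑ l ∈ Finset.range i, (p ^ k) ^ l) * z := by
      rw [← h, pow_succ, mul_comm _ (p ^ k - 1), pow_mul]
    rw [h2, mul_pow]
    ring
  have hcount := aux_count (G := Kˣ) (p ^ Nat.gcd k m - 1) (p ^ k - 1) hg
    (fun j => Units.mk0 (ξ j) (hξ0 j)) (by
      intro y
      obtain ⟨j, ⟨t, ht0, ht⟩, hu⟩ := hξ y y.ne_zero
      refine ⟨j, ⟨Units.mk0 t ht0, Units.ext (by simpa using ht)⟩, ?_⟩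
      rintro j2 ⟨t2, ht2⟩
      exact hu j2 ⟨t2, t2.ne_zero, by simpa using congrArg Units.val ht2⟩)
    (fun x => P x = 0)
  have hL := aux_units (fun x : K => P x = 0) (by simpa [hP0] using ha0)
  have hR : ∀ j, {x : K | ∑ i ∈ Finset.range (n + 1),
            a i * (ξ j) ^ (∑ l ∈ Finset.range i, (p ^ k) ^ l) * x ^ (p ^ k) ^ i = 0}.ncard
      = (Finset.univ.filter (fun z : Kˣ =>
          P ((Units.mk0 (ξ j) (hξ0 j) * z ^ (p ^ k - 1) : Kˣ) : K) = 0)).card + 1 := by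
    intro j
    have h1 := aux_units (fun x : K => x ≠ 0 ∧ P (ξ j * x ^ (p ^ k - 1)) = 0) (by simp)
    have h2 : {x : K | ∑ i ∈ Finset.range (n + 1),
            a i * (ξ j) ^ (∑ l ∈ Finset.range i, (p ^ k) ^ l) * x ^ (p ^ k) ^ i = 0}
        = insert 0 {x : K | x ≠ 0 ∧ P (ξ j * x ^ (p ^ k - 1)) = 0} := by
      ext x
      simp only [hA, Set.mem_ofPred_eq, Set.mem_insert_iff, mul_eq_zero]
      tauto
    rw [h2, Set.ncard_insert_of_notMem (by simp) (Set.toFinite _), h1]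
    congr 2
    ext z
    rw [Finset.mem_filter, Finset.mem_filter]
    simp
  change (({x : K | P x = 0}.ncard : ℚ)) = _
  rw [hL, hτQ, ← Finset.sum_div, eq_div_iff hτ0]
  have h3 : ((∑ j : Fin (p ^ Nat.gcd k m - 1), (Finset.univ.filter (fun z : Kˣ =>
          P ((Units.mk0 (ξ j) (hξ0 j) * z ^ (p ^ k - 1) : Kˣ) : K) = 0)).card : ℕ) : ℚ)
      = (((p ^ Nat.gcd k m - 1) * (Finset.univ.filter (fun x : Kˣ => P x = 0)).card : ℕ) : ℚ) := by
    rw [← hcount]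
  rw [Nat.cast_mul, Nat.cast_sum] at h3
  rw [mul_comm, ← h3]
  refine Finset.sum_congr rfl fun j _ => ?_
  rw [hR j]
  push_cast
  ring
end

section
/- Let q = p^m, σ = p^k, and let a_0,…,a_n ∈ F_q with a_0 ≠ 0 and a_n ≠ 0. Define the projective polynomials P_σ(x) = Σ_{i=0}^{n} a_i·x^{(σ^i−1)/(σ−1)} and P̃_σ(x) = Σ_{i=0}^{n} a_{n−i}^{σ^i}·x^{(σ^i−1)/(σ−1)} in F_q[x]. Then P_σ and P̃_σ have the same number of distinct roots in F_q: N_q(P_σ) = N_q(P̃_σ). -/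
theorem psi_exists {p : ℕ} (hp : p.Prime) {K : Type*} [Field K] [Fintype K] [CharP K p] :
    ∃ ψ : AddChar K ℂ, ψ.IsPrimitive ∧ ∀ y, ψ (y ^ p) = ψ y := by
  have : Fact p.Prime := ⟨hp⟩
  let : Algebra (ZMod p) K := ZMod.algebra K p
  let ψ : AddChar K ℂ :=
    (ZMod.stdAddChar (N := p)).compAddMonoidHom (Algebra.trace (ZMod p) K).toAddMonoidHom
  have hinv : ∀ y, ψ (y ^ p) = ψ y := by
    intro y
    have h := Algebra.trace_eq_of_algEquiv (FiniteField.frobeniusAlgEquiv (ZMod p) K p) y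
    have h2 : (FiniteField.frobeniusAlgEquiv (ZMod p) K p) y = y ^ p := by
      simp
    rw [h2] at h
    simp only [ψ, AddChar.compAddMonoidHom_apply]
    exact congrArg _ h
  refine ⟨ψ, AddChar.IsPrimitive.of_ne_one ?_, hinv⟩
  intro h1
  obtain ⟨b, hb⟩ := Algebra.trace_surjective (ZMod p) K 1
  have h2 : ZMod.stdAddChar (Algebra.trace (ZMod p) K b) = 1 := DFunLike.congr_fun h1 b
  rw [hb, (ZMod.isPrimitive_stdAddChar p).zmod_char_eq_one_iff] at h2
  exact one_ne_zero h2

theorem psi_pow {p : ℕ} {K : Type*} [Field K] (ψ : AddChar K ℂ)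
    (h : ∀ y, ψ (y ^ p) = ψ y) (k i : ℕ) (y : K) : ψ (y ^ (p ^ k) ^ i) = ψ y := by
  rw [← pow_mul]
  induction k * i with
  | zero => simp
  | succ j ih => rw [pow_succ, pow_mul, h, ih]

theorem card_ker {p k n : ℕ} (hp : p.Prime) {K : Type*} [Field K] [Fintype K] [DecidableEq K]
    [CharP K p] (b : ℕ → K) :
    (Finset.univ.filter fun c : K => ∑ i ∈ Finset.range (n + 1), b i * c ^ (p ^ k) ^ i = 0).card =
    (Finset.univ.filter fun e : K => ∑ j ∈ Finset.range (n + 1),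
      b (n - j) ^ (p ^ k) ^ j * e ^ (p ^ k) ^ j = 0).card := by
  have : Fact p.Prime := ⟨hp⟩
  obtain ⟨ψ, hψ, hinv⟩ := psi_exists hp (K := K)
  set A : K → K := fun c => ∑ i ∈ Finset.range (n + 1), b i * c ^ (p ^ k) ^ i with hA
  set B : K → K := fun e => ∑ j ∈ Finset.range (n + 1),
      b (n - j) ^ (p ^ k) ^ j * e ^ (p ^ k) ^ j with hB
  have key : ∀ c e, ψ (e * A c) = ψ (c ^ (p ^ k) ^ n * B e) := by
    intro c e
    simp only [hA, hB, Finset.mul_sum]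
    have hs : ∀ f : ℕ → K, ψ (∑ i ∈ Finset.range (n + 1), f i)
        = ∏ i ∈ Finset.range (n + 1), ψ (f i) := by
      intro f
      induction Finset.range (n + 1) using Finset.induction_on with
      | empty => simp
      | insert j S hj ih => rw [Finset.sum_insert hj, Finset.prod_insert hj, ψ.map_add_eq_mul, ih]
    rw [hs, hs, ← Finset.prod_range_reflect]
    refine Finset.prod_congr rfl fun j hj => ?_
    have hj' : j ≤ n := by simpa [Nat.lt_succ_iff] using hj
    rw [← psi_pow ψ hinv k j]
    congr 1
    have : (p ^ k) ^ n = (p ^ k) ^ (n - j) * (p ^ k) ^ j := by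
      rw [← pow_add, Nat.sub_add_cancel hj']
    rw [this, show n + 1 - 1 - j = n - j by omega, pow_mul c]
    ring
  have hbij : Function.Bijective (fun c : K => c ^ (p ^ k) ^ n) := by
    apply Finite.injective_iff_bijective.mp
    intro x y hxy
    apply iterateFrobenius_inj K p (k * n)
    simpa [iterateFrobenius_def, pow_mul] using hxy
  have h1 : ∑ c, ∑ e, ψ (e * A c) = (Fintype.card K : ℂ) * (Finset.univ.filter fun c => A c = 0).card := by
    simp_rw [AddChar.sum_mulShift _ hψ]
    simp [Finset.sum_ite, mul_comm]
  have h2 : ∑ c, ∑ e, ψ (e * A c) = (Fintype.card K : ℂ) * (Finset.univ.filter fun c => B c = 0).card := by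
    simp_rw [key]
    rw [Finset.sum_comm]
    have : ∀ e, ∑ c : K, ψ (c ^ (p ^ k) ^ n * B e) = ∑ c, ψ (c * B e) := fun e =>
      Function.Bijective.sum_comp hbij (fun c => ψ (c * B e))
    simp_rw [this, AddChar.sum_mulShift _ hψ]
    simp [Finset.sum_ite, mul_comm]
  have h3 := h1.symm.trans h2
  have : (Fintype.card K : ℂ) ≠ 0 := by exact_mod_cast Fintype.card_ne_zero
  exact_mod_cast mul_left_cancel₀ this h3

theorem geom_a (t i : ℕ) : t * ∑ l ∈ Finset.range i, (t + 1) ^ l + 1 = (t + 1) ^ i := by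
  induction i with
  | zero => simp
  | succ i ih => rw [Finset.sum_range_succ, pow_succ, mul_add, ← ih]; ring

theorem geom_b (s : ℕ) {j n : ℕ} (h : j ≤ n) : ∑ l ∈ Finset.range n, s ^ l =
    ∑ l ∈ Finset.range j, s ^ l + (∑ l ∈ Finset.range (n - j), s ^ l) * s ^ j := by
  obtain ⟨d, rfl⟩ := Nat.exists_eq_add_of_le h
  rw [Finset.sum_range_add, Nat.add_sub_cancel_left, Finset.sum_mul]
  congr 1
  exact Finset.sum_congr rfl fun _ _ => by rw [← pow_add, add_comm]

theorem sum_count {G : Type*} [CommGroup G] [Fintype G] (t : ℕ) (f : G → Prop) [DecidablePred f] :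
    ∑ x : G, (Finset.univ.filter fun c : G => f (x * c ^ t)).card =
      Fintype.card G * (Finset.univ.filter f).card := by
  simp_rw [Finset.card_filter]
  rw [Finset.sum_comm]
  have : ∀ c : G, ∑ x : G, (if f (x * c ^ t) then 1 else 0) = ∑ x, if f x then 1 else 0 :=
    fun c => Equiv.sum_comp (Equiv.mulRight (c ^ t)) (fun x => if f x then 1 else 0)
  simp [this]

theorem card_units {K : Type*} [Field K] [Fintype K] [DecidableEq K] (f : K → Prop)
    [DecidablePred f] :
    (Finset.univ.filter f).card = (Finset.univ.filter fun x : Kˣ => f x).card +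
      if f 0 then 1 else 0 := by
  simp_rw [Finset.card_filter]
  rw [← Fintype.sum_subtype_add_sum_subtype (fun x : K => x ≠ 0)]
  congr 1
  · exact (Equiv.sum_comp unitsEquivNeZero (fun x : {x : K // x ≠ 0} => if f x then 1 else 0)).symm
  · rw [Fintype.sum_eq_single (⟨0, by simp⟩ : {x : K // ¬ x ≠ 0})]
    rintro ⟨x, hx⟩ h
    simp at hx; subst hx; simp at h

theorem stmt13 {p m k n : ℕ} (hp : p.Prime) (hm : 0 < m)
    {K : Type*} [Field K] [Fintype K] (hK : Fintype.card K = p ^ m)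
    (a : ℕ → K) (ha0 : a 0 ≠ 0) (han : a n ≠ 0) :
    {x : K | ∑ i ∈ Finset.range (n + 1),
        a i * x ^ (∑ l ∈ Finset.range i, (p ^ k) ^ l) = 0}.ncard =
      {x : K | ∑ i ∈ Finset.range (n + 1),
        (a (n - i)) ^ (p ^ k) ^ i * x ^ (∑ l ∈ Finset.range i, (p ^ k) ^ l) = 0}.ncard := by
  classical
  have : Fact p.Prime := ⟨hp⟩
  have : CharP K p := charP_of_card_eq_prime_pow hK
  obtain ⟨t, ht⟩ : ∃ t, p ^ k = t + 1 :=
    ⟨p ^ k - 1, by have := Nat.pow_pos (n := k) hp.pos; omega⟩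
  set s : ℕ → ℕ := fun i => ∑ l ∈ Finset.range i, (p ^ k) ^ l with hs
  have hs0 : s 0 = 0 := by simp [hs]
  have hspos : ∀ i, i ≠ 0 → s i ≠ 0 := by
    intro i hi
    obtain ⟨j, rfl⟩ := Nat.exists_eq_succ_of_ne_zero hi
    simp only [hs, Finset.sum_range_succ']
    simp
  have hsa : ∀ i, (p ^ k) ^ i = t * s i + 1 := fun i => by
    simp only [hs, ht]; exact (geom_a t i).symm
  have hsb : ∀ j, j ≤ n → s n = s j + s (n - j) * (p ^ k) ^ j := fun j hj => geom_b _ hj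
  set P : K → K := fun x => ∑ i ∈ Finset.range (n + 1), a i * x ^ s i with hP
  set Q : K → K := fun x => ∑ i ∈ Finset.range (n + 1),
    (a (n - i)) ^ (p ^ k) ^ i * x ^ s i with hQ
  have hP0 : P 0 ≠ 0 := by
    simp only [hP]
    rw [Finset.sum_range_succ', Finset.sum_eq_zero]
    · simpa [hs0] using ha0
    · intro i _; simp [hspos (i + 1)]
  have hQ0 : Q 0 ≠ 0 := by
    simp only [hQ]
    rw [Finset.sum_range_succ', Finset.sum_eq_zero]
    · simpa [hs0] using han
    · intro i _; simp [hspos (i + 1)]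
  suffices h : (Finset.univ.filter fun x => P x = 0).card =
      (Finset.univ.filter fun x => Q x = 0).card by
    have e : ∀ f : K → K, {x | f x = 0}.ncard = (Finset.univ.filter fun x => f x = 0).card := by
      intro f
      rw [← Set.ncard_coe_finset]; simp
    exact (e P).trans (h.trans (e Q).symm)
  rw [card_units (fun x => P x = 0), card_units (fun x => Q x = 0), if_neg hP0, if_neg hQ0,
    add_zero, add_zero]
  have main : ∀ x : Kˣ, (Finset.univ.filter fun c : Kˣ => P ↑(x * c ^ t) = 0).card =
      (Finset.univ.filter fun c : Kˣ => Q ↑(x⁻¹ * c ^ t) = 0).card := by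
    intro x
    have h := card_ker hp (k := k) (n := n) (fun i => a i * (x : K) ^ s i)
    rw [card_units, card_units (fun e : K => ∑ j ∈ Finset.range (n + 1),
      (a (n - j) * (x : K) ^ s (n - j)) ^ (p ^ k) ^ j * e ^ (p ^ k) ^ j = 0)] at h
    have hne : ∀ i, (p ^ k) ^ i ≠ 0 := fun i => by rw [hsa]; omega
    rw [if_pos (Finset.sum_eq_zero fun i _ => by rw [zero_pow (hne i), mul_zero]),
      if_pos (Finset.sum_eq_zero fun i _ => by rw [zero_pow (hne i), mul_zero])] at h
    have h := Nat.add_right_cancel h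
    refine (congrArg Finset.card (Finset.filter_congr fun c _ => ?_)).trans
      (h.trans (congrArg Finset.card (Finset.filter_congr fun c _ => ?_)).symm)
    · have : ∑ i ∈ Finset.range (n + 1), a i * (x : K) ^ s i * (c : K) ^ (p ^ k) ^ i
          = c * P ↑(x * c ^ t) := by
        simp only [hP, Finset.mul_sum]
        refine Finset.sum_congr rfl fun i _ => ?_
        rw [hsa, pow_succ, pow_mul]
        push_cast
        ring
      rw [this]; simp
    · have : ∑ j ∈ Finset.range (n + 1), (a (n - j) * (x : K) ^ s (n - j)) ^ (p ^ k) ^ j *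
          (c : K) ^ (p ^ k) ^ j = (x : K) ^ s n * c * Q ↑(x⁻¹ * c ^ t) := by
        simp only [hQ, Finset.mul_sum]
        refine Finset.sum_congr rfl fun j hj => ?_
        have hj' : j ≤ n := by simpa [Nat.lt_succ_iff] using hj
        have hx : (x : K) ^ s j * ((x : K)⁻¹) ^ s j = 1 := by
          rw [← mul_pow]; simp
        have hc : (c : K) ^ (p ^ k) ^ j = ((c : K) ^ t) ^ s j * c := by
          rw [hsa, pow_succ, pow_mul]
        rw [hsb j hj', mul_pow, hc, pow_add, pow_mul]
        push_cast
        rw [mul_pow]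
        linear_combination (-(a (n - j) ^ (p ^ k) ^ j * ((x : K) ^ s (n - j)) ^ (p ^ k) ^ j
          * ((c : K) ^ t) ^ s j * c)) * hx
      rw [this]; simp
  have h1 := sum_count t (fun x : Kˣ => P x = 0)
  have h2 := sum_count t (fun x : Kˣ => Q x = 0)
  rw [← Equiv.sum_comp (Equiv.inv Kˣ)] at h2
  have h3 := h1.symm.trans ((Finset.sum_congr rfl fun x _ => main x).trans h2)
  exact Nat.eq_of_mul_eq_mul_left Fintype.card_pos h3
end

section
/- Let q = p^m, σ = p^k, and let a,b,c ∈ F_q with a ≠ 0. Then the polynomials Π_1(x) = x^{σ²+σ+1} − b·x^{σ²+σ} + a·c^σ·x^{σ²} − a^{σ+1} and Π_2(x) = x^{σ²+σ+1} + c·x^{σ²+σ} + b·x^{σ²} + a in F_q[x] have the same number of distinct roots in F_q. -/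
section helpers
open Finset

lemma aux_card_one {K : Type*} [Field K] [Fintype K] [DecidableEq K] (v : Fin 3 → K) (hv : v ≠ 0) :
    #{w : Fin 3 → K | v ⬝ᵥ w = 0} = Fintype.card K ^ 2 := by
  classical
  have hs : Function.Surjective (Matrix.mulVecLin (Matrix.of ![v])) := by
    have hl : LinearIndependent K (Matrix.of ![v]).row := by
      have : LinearIndependent K ![v] := by
        rw [linearIndependent_unique_iff]; simpa using hv
      exact this
    have := hl.rank_matrix
    rw [← LinearMap.range_eq_top]
    apply Submodule.eq_top_of_finrank_eq
    rw [← Matrix.rank, this]; simp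
  have h := LinearMap.finrank_range_add_finrank_ker (Matrix.mulVecLin (Matrix.of ![v]))
  rw [LinearMap.range_eq_top.2 hs] at h
  simp at h
  have h2 : Module.finrank K (LinearMap.ker (Matrix.mulVecLin (Matrix.of ![v]))) = 2 := by omega
  have h3 := Module.card_eq_pow_finrank (K := K) (V := LinearMap.ker (Matrix.mulVecLin (Matrix.of ![v])))
  rw [h2] at h3
  rw [← h3, Fintype.card_subtype]
  congr 1
  ext w
  simp [LinearMap.mem_ker, funext_iff, Matrix.mulVec]

lemma aux_card_two {K : Type*} [Field K] [Fintype K] [DecidableEq K] (v u : Fin 3 → K)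
    (hl : LinearIndependent K ![v, u]) :
    #{w : Fin 3 → K | v ⬝ᵥ w = 0 ∧ u ⬝ᵥ w = 0} = Fintype.card K := by
  classical
  have hs : Function.Surjective (Matrix.mulVecLin (Matrix.of ![v, u])) := by
    have hl : LinearIndependent K (Matrix.of ![v, u]).row := hl
    have := hl.rank_matrix
    rw [← LinearMap.range_eq_top]
    apply Submodule.eq_top_of_finrank_eq
    rw [← Matrix.rank, this]; simp
  have h := LinearMap.finrank_range_add_finrank_ker (Matrix.mulVecLin (Matrix.of ![v, u]))
  rw [LinearMap.range_eq_top.2 hs] at h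
  simp at h
  have h2 : Module.finrank K (LinearMap.ker (Matrix.mulVecLin (Matrix.of ![v, u]))) = 1 := by omega
  have h3 := Module.card_eq_pow_finrank (K := K) (V := LinearMap.ker (Matrix.mulVecLin (Matrix.of ![v, u])))
  rw [h2, pow_one] at h3
  rw [← h3, Fintype.card_subtype]
  congr 1
  ext w
  simp [LinearMap.mem_ker, funext_iff, Matrix.mulVec]

open Classical in
lemma aux_sum_s14 {K : Type*} [Field K] [Fintype K] (f : (Fin 3 → K) → (Fin 3 → K)) (hf : f 0 = 0) :
    ∑ v, #{w : Fin 3 → K | v ⬝ᵥ w = 0 ∧ f v ⬝ᵥ w = 0} =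
      Fintype.card K ^ 3 * Fintype.card K +
      #{v : Fin 3 → K | v ≠ 0 ∧ ∃ l : K, l • v = f v} * (Fintype.card K ^ 2 - Fintype.card K)
      + (Fintype.card K ^ 3 - Fintype.card K) := by
  have hq : 1 ≤ Fintype.card K := Fintype.card_pos
  have h12 : Fintype.card K ≤ Fintype.card K ^ 2 := by nlinarith
  have h13 : Fintype.card K ≤ Fintype.card K ^ 3 := Nat.le_self_pow (by norm_num) _
  have key : ∀ v : Fin 3 → K, #{w : Fin 3 → K | v ⬝ᵥ w = 0 ∧ f v ⬝ᵥ w = 0} =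
      Fintype.card K + (if v ≠ 0 ∧ ∃ l : K, l • v = f v then
        (Fintype.card K ^ 2 - Fintype.card K) else 0) +
      (if v = 0 then (Fintype.card K ^ 3 - Fintype.card K) else 0) := by
    intro v
    by_cases hv : v = 0
    · subst hv
      simp [hf]
      omega
    · by_cases hl : ∃ l : K, l • v = f v
      · rw [if_pos ⟨hv, hl⟩, if_neg hv]
        obtain ⟨l, hl⟩ := hl
        have := aux_card_one v hv
        have h2 : (univ.filter fun w : Fin 3 → K => v ⬝ᵥ w = 0 ∧ f v ⬝ᵥ w = 0) =
          univ.filter fun w : Fin 3 → K => v ⬝ᵥ w = 0 := by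
          ext w
          simp only [mem_filter, mem_univ, true_and, ← hl, smul_dotProduct]
          constructor
          · exact fun h => h.1
          · intro h; simp [h]
        rw [h2, this]; omega
      · rw [if_neg (fun h => hl h.2), if_neg hv]
        push Not at hl
        rw [aux_card_two v (f v) ((LinearIndependent.pair_iff' hv).2 hl)]
        simp
  simp_rw [key, sum_add_distrib]
  rw [sum_ite_eq' , ← sum_filter]
  simp

open Classical in
lemma aux_eq {K : Type*} [Field K] [Fintype K] (f g : (Fin 3 → K) → (Fin 3 → K))
    (hf : f 0 = 0) (hg : g 0 = 0) (h : ∀ v w, f v ⬝ᵥ w = 0 ↔ g w ⬝ᵥ v = 0) :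
    {v : Fin 3 → K | v ≠ 0 ∧ ∃ l : K, l • v = f v}.ncard =
    {v : Fin 3 → K | v ≠ 0 ∧ ∃ l : K, l • v = g v}.ncard := by
  have h1 := aux_sum_s14 f hf
  have h2 := aux_sum_s14 g hg
  have h3 : ∑ v, #{w : Fin 3 → K | v ⬝ᵥ w = 0 ∧ f v ⬝ᵥ w = 0} =
      ∑ v, #{w : Fin 3 → K | v ⬝ᵥ w = 0 ∧ g v ⬝ᵥ w = 0} := by
    simp_rw [card_filter]
    rw [sum_comm]
    refine sum_congr rfl fun w _ => sum_congr rfl fun v _ => ?_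
    simp only [h, dotProduct_comm v w]
  have hq : 2 ≤ Fintype.card K := Fintype.one_lt_card
  have h4 : 0 < Fintype.card K ^ 2 - Fintype.card K := by
    apply Nat.sub_pos_of_lt; nlinarith
  rw [h1, h2] at h3
  have h5 := Nat.eq_of_mul_eq_mul_right h4 (Nat.add_left_cancel (Nat.add_right_cancel h3))
  simpa [Set.ncard_eq_toFinset_card'] using h5

lemma aux_E {K : Type*} [Field K] [Fintype K] (E : Set (Fin 3 → K)) (R : Set K)
    (g : K → Fin 3 → K) (i : Fin 3) (hsc : ∀ t : K, t ≠ 0 → ∀ v ∈ E, t • v ∈ E)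
    (hi : ∀ v ∈ E, v i ≠ 0) (hgi : ∀ x ∈ R, g x i = 1) (hinj : Set.InjOn g R)
    (hE : ∀ v, v i = 1 → (v ∈ E ↔ ∃ x ∈ R, v = g x)) :
    E.ncard = (({0}ᶜ : Set K)).ncard * R.ncard := by
  rw [← Set.ncard_prod]
  symm
  refine Set.ncard_congr (fun tx _ => tx.1 • g tx.2) ?_ ?_ ?_
  · rintro ⟨t, x⟩ ⟨ht, hx⟩
    exact hsc t ht _ ((hE _ (hgi x hx)).2 ⟨x, hx, rfl⟩)
  · rintro ⟨t, x⟩ ⟨t', x'⟩ ⟨ht, hx⟩ ⟨ht', hx'⟩ h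
    simp only at h ht hx hx'
    have h0 := congrFun h i
    simp [hgi x hx, hgi x' hx'] at h0
    subst h0
    have := smul_right_injective _ (show t ≠ 0 from ht) h
    rw [hinj hx hx' this]
  · intro v hv
    have h0 := hi v hv
    obtain ⟨x, hx, h⟩ := (hE ((v i)⁻¹ • v) (by simp [h0])).1 (hsc _ (inv_ne_zero h0) v hv)
    refine ⟨(v i, x), ⟨h0, hx⟩, ?_⟩
    simp [← h, h0]

lemma aux_main_s14 {K : Type*} [Field K] [Fintype K] (r : K ≃+* K) (A B c : K) (hA : A ≠ 0) :
    {x : K | r (r x) * r x * x - r B * (r (r x) * r x) + r (r A) * r c * r (r x)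
        - r (r (r A)) * r (r A) = 0}.ncard =
    {x : K | r (r x) * r x * x + c * (r (r x) * r x) + r B * r (r x) + r (r A) = 0}.ncard := by
  let f : (Fin 3 → K) → (Fin 3 → K) := fun v =>
    ![-c * r (v 0) + r (v 1), -B * r (v 0) + r (v 2), -A * r (v 0)]
  let g : (Fin 3 → K) → (Fin 3 → K) := fun w =>
    ![r.symm (-c * w 0 - B * w 1 - A * w 2), r.symm (w 0), r.symm (w 1)]
  have key := aux_eq f g (by ext i; fin_cases i <;> simp [f]) (by ext i; fin_cases i <;> simp [g]) (by
    intro v w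
    rw [← map_eq_zero_iff r r.injective (x := g w ⬝ᵥ v)]
    simp only [f, g, dotProduct, Fin.sum_univ_three, map_add, map_mul]
    simp
    ring_nf)
  have hfs : ∀ (t : K) v, f (t • v) = r t • f v := by
    intro t v
    ext i; fin_cases i <;> simp [f] <;> ring
  have hgs : ∀ (t : K) v, g (t • v) = r.symm t • g v := by
    intro t v
    ext i; fin_cases i <;> simp [g] <;> ring
  have scal : ∀ (h : (Fin 3 → K) → (Fin 3 → K)) (r : K ≃+* K) (_ : ∀ (t : K) v, h (t • v) = r t • h v),
      ∀ t : K, t ≠ 0 → ∀ v ∈ {v : Fin 3 → K | v ≠ 0 ∧ ∃ l : K, l • v = h v},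
        t • v ∈ {v : Fin 3 → K | v ≠ 0 ∧ ∃ l : K, l • v = h v} := by
    rintro h r hh t ht v ⟨hv, l, hl⟩
    refine ⟨smul_ne_zero ht hv, r t * l / t, ?_⟩
    rw [hh, ← hl, smul_smul, smul_smul]
    congr 1
    field_simp
  have hr0 : ∀ x, r x = 0 ↔ x = 0 := fun x => map_eq_zero_iff r r.injective
  have hs0 : ∀ x, r.symm x = 0 ↔ x = 0 := fun x => map_eq_zero_iff r.symm r.symm.injective
  have hrA : r A ≠ 0 := by simpa
  have hrrA : r (r A) ≠ 0 := by simpa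
  have hrrrA : r (r (r A)) ≠ 0 := by simpa
  have E2 := aux_E {v : Fin 3 → K | v ≠ 0 ∧ ∃ l : K, l • v = f v}
    {x : K | r (r x) * r x * x + c * (r (r x) * r x) + r B * r (r x) + r (r A) = 0}
    (fun x => ![1, r.symm (x + c), -A / x]) 0 (scal f r hfs)
    (by
      rintro v ⟨hv, l, hl⟩ h0
      apply hv
      have e0 := congrFun hl 0
      have e1 := congrFun hl 1
      simp [f, h0] at e0 e1
      have e0 := (hr0 _).1 e0.symm
      rw [e0] at e1
      have e1 := (hr0 _).1 (e1.symm.trans (mul_zero _))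
      ext i; fin_cases i <;> simp [h0, e0, e1])
    (by simp)
    (by
      intro x _ y _ h
      have := congrFun h 1
      simpa using this)
    (by
      intro v hv0
      constructor
      · rintro ⟨hv, l, hl⟩
        have e0 := congrFun hl 0
        have e1 := congrFun hl 1
        have e2 := congrFun hl 2
        simp [f, hv0] at e0 e1 e2
        have hl0 : l ≠ 0 := by
          rintro rfl
          simp [hA] at e2
          
        refine ⟨l, ?_, ?_⟩
        · have e1' := congrArg r e1
          have e2' := congrArg (fun z => r (r z)) e2
          simp at e1' e2'
          simp only [Set.mem_ofPred_eq]
          linear_combination r (r l) * r l * e0 + r (r l) * e1' + e2'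
        · ext i; fin_cases i
          · simpa
          · apply r.injective
            simp [e0]
          · simp
            field_simp
            linear_combination e2
      · rintro ⟨x, hx, rfl⟩
        have hx0 : x ≠ 0 := by
          rintro rfl
          simp [hA] at hx
        have hrx0 : r x ≠ 0 := by simpa
        have hrrx0 : r (r x) ≠ 0 := by simpa
        refine ⟨fun h => by simpa using congrFun h 0, x, ?_⟩
        ext i; fin_cases i
        · simp [f]
        · apply r.injective
          simp [f]
          simp only [Set.mem_ofPred_eq] at hx
          field_simp
          linear_combination hx
        · simp [f]
          field_simp)
  have E1 := aux_E {v : Fin 3 → K | v ≠ 0 ∧ ∃ l : K, l • v = g v}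
    {x : K | r (r x) * r x * x - r B * (r (r x) * r x) + r (r A) * r c * r (r x)
        - r (r (r A)) * r (r A) = 0}
    (fun x => ![(-A / r.symm x) * (- r A / x), -A / r.symm x, 1]) 2 (scal g r.symm hgs)
    (by
      rintro v ⟨hv, l, hl⟩ h0
      apply hv
      have e1 := congrFun hl 1
      have e2 := congrFun hl 2
      simp [g, h0] at e1 e2
      have e2 := (hs0 _).1 e2.symm
      rw [e2] at e1
      have e1 := (hs0 _).1 (e1.symm.trans (mul_zero _))
      ext i; fin_cases i <;> simp [h0, e2, e1])
    (by simp)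
    (by
      intro x _ y _ h
      have := congrFun h 1
      simpa [div_eq_mul_inv, hA] using this)
    (by
      intro v hv0
      constructor
      · rintro ⟨hv, l, hl⟩
        have e0 := congrArg r (congrFun hl 0)
        have e1 := congrArg r (congrFun hl 1)
        have e2 := congrArg r (congrFun hl 2)
        simp [g, hv0] at e0 e1 e2
        -- `r l = v 1`, `v 0 = r l * r (v 1)`
        have hl0 : l ≠ 0 := by
          rintro rfl
          simp at e0 e1 e2
          simp [← e1, ← e2, hA] at e0
        have h1 : r l ≠ 0 := by simpa
        have h2 : r (r l) ≠ 0 := by simpa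
        have h3 : r (r (r l)) ≠ 0 := by simpa
        have h4 : r (r (r (r l))) ≠ 0 := by simpa
        refine ⟨- r A / r (r l), ?_, ?_⟩
        · simp only [Set.mem_ofPred_eq]
          rw [← e1, ← e2] at e0
          have e0' := congrArg r e0
          simp at e0'
          simp
          field_simp
          linear_combination (-(r (r (r A)) * r (r A))) * e0'
        · ext i; fin_cases i
          · simp [← e1, ← e2]
            field_simp
          · simp [← e2]
            field_simp
          · simpa
      · rintro ⟨x, hx, rfl⟩
        obtain ⟨y, rfl⟩ := r.surjective x
        have hx0 : y ≠ 0 := by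
          rintro rfl
          simp [hA] at hx
        have h1 : r y ≠ 0 := by simpa
        have h2 : r (r y) ≠ 0 := by simpa
        have h3 : r (r (r y)) ≠ 0 := by simpa
        refine ⟨fun h => by simpa using congrFun h 2, r.symm (-A / y), ?_⟩
        ext i; fin_cases i
        · apply r.injective
          apply r.injective
          simp [g]
          simp only [Set.mem_ofPred_eq] at hx
          field_simp
          linear_combination hx
        · apply r.injective
          simp [g]
        · apply r.injective
          simp [g])
  rw [E1, E2] at key
  refine (Nat.eq_of_mul_eq_mul_left ?_ key).symm
  rw [Set.ncard_pos]
  exact ⟨1, by simp⟩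

end helpers



/-- for `a,b,c ∈ F_q` with `a ≠ 0`, the polynomials
`Π₁(x) = x^{σ²+σ+1} - b x^{σ²+σ} + a c^σ x^{σ²} - a^{σ+1}` and
`Π₂(x) = x^{σ²+σ+1} + c x^{σ²+σ} + b x^{σ²} + a` have the same number of
distinct roots in `F_q`. -/
theorem stmt14 {p m k : ℕ} (hp : p.Prime) (hm : 0 < m)
    {K : Type*} [Field K] [Fintype K] (hK : Fintype.card K = p ^ m)
    (a b c : K) (ha : a ≠ 0) :
    {x : K | x ^ (p ^ (2 * k) + p ^ k + 1) - b * x ^ (p ^ (2 * k) + p ^ k)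
        + a * c ^ p ^ k * x ^ (p ^ (2 * k)) - a ^ (p ^ k + 1) = 0}.ncard =
      {x : K | x ^ (p ^ (2 * k) + p ^ k + 1) + c * x ^ (p ^ (2 * k) + p ^ k)
        + b * x ^ (p ^ (2 * k)) + a = 0}.ncard := by
  
  have : Fact p.Prime := ⟨hp⟩
  have : CharP K p := by
    obtain ⟨n, hpr, hn⟩ := FiniteField.card K (ringChar K)
    have h : p = ringChar K := by
      have : ringChar K ∣ p ^ m := by
        rw [← hK, hn]; exact dvd_pow_self _ n.pos.ne'
      exact ((Nat.prime_dvd_prime_iff_eq hpr hp).1 (hpr.dvd_of_dvd_pow this)).symm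
    rw [h]; exact ringChar.charP K
  have : PerfectRing K p := PerfectRing.ofFiniteOfIsReduced p K
  let r : K ≃+* K := iterateFrobeniusEquiv K p k
  have hr : ∀ x, r x = x ^ p ^ k := fun x => iterateFrobeniusEquiv_def K p k x
  obtain ⟨A', hA'⟩ := r.surjective a
  obtain ⟨A, rfl⟩ := r.surjective A'
  obtain ⟨B, rfl⟩ := r.surjective b
  subst hA'
  have hA : A ≠ 0 := by rintro rfl; simp at ha
  have hrr : ∀ x : K, x ^ p ^ (2 * k) = r (r x) := by
    intro x
    rw [hr, hr, ← pow_mul, ← pow_add, two_mul]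
  have := aux_main_s14 r A B c hA
  simp only [pow_add, pow_one, hrr, ← hr]
  exact this
end

section
/- Let q = p^m be odd and let F : F_q^n → F_q^n be a σ-semiquadratic homogeneous map (F ∈ SQH(n,q)) with companion automorphism σ = p^k such that F(x) = 0 ⟺ x = 0 and F is 2-to-1 on F_q^n∖{0}. Let α ∈ F_q^×. If n is even, or if α is a square in F_q^×, then α·Im(F) = Im(F), where Im(F) = {F(x) : x ∈ F_q^n} and α·Im(F) = {α·w : w ∈ Im(F)}. -/
/-- A map `F : F_q^n → F_q^n` is σ-semiquadratic homogeneous (`F ∈ SQH(n,q)` with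
σ = p^k encoded as the natural number exponent `σ`). -/
def IsSQH {K : Type*} [Field K] {n : ℕ} (σ : ℕ)
    (F : (Fin n → K) → (Fin n → K)) : Prop :=
  ∀ i : Fin n,
    (∀ (c : K) (x : Fin n → K), F (c • x) i = c ^ (σ + 1) * F x i) ∧
    ∃ b : (Fin n → K) → (Fin n → K) → K,
      (∀ x x' y, b (x + x') y = b x y + b x' y) ∧
      (∀ x y y', b x (y + y') = b x y + b x y') ∧
      (∀ (c : K) (x y), b (c • x) y = c * b x y) ∧
      (∀ (c : K) (x y), b x (c • y) = c ^ σ * b x y) ∧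
      (∀ x y, F (x + y) i - F x i - F y i = b x y + b y x)

lemma gsum_neg {k : Type*} [Field k] [Fintype k] [DecidableEq k] (hk : ringChar k ≠ 2)
    (ψ : AddChar k ℂ) (hψ : ψ ≠ 1) (α w : k) (hα : ¬ IsSquare α) (hw : w ≠ 0) :
    ∑ t : k, ψ (α * w * (t * t)) = - ∑ t : k, ψ (w * (t * t)) := by
  have hα0 : α ≠ 0 := by rintro rfl; exact hα (IsSquare.zero)
  have key : ∀ v : k, v ≠ 0 → ∑ t : k, ψ (v * (t * t)) = ∑ s : k, (quadraticChar k s : ℂ) * ψ (v * s) := by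
    intro v hv
    have h0 : ∑ s : k, ψ (v * s) = 0 := by
      rw [← AddChar.sum_eq_zero_of_ne_one hψ]
      exact Fintype.sum_equiv (Equiv.mulLeft₀ v hv) _ _ (fun x => rfl)
    have h1 : ∑ t : k, ψ (v * (t * t)) = ∑ s : k, ∑ t : k with t * t = s, ψ (v * (t * t)) :=
      (Finset.sum_fiberwise _ _ _).symm
    rw [h1, ← add_zero (∑ s : k, (quadraticChar k s : ℂ) * ψ (v * s)), ← h0, ← Finset.sum_add_distrib]
    refine Finset.sum_congr rfl fun s _ => ?_
    have h2 : ∑ t : k with t * t = s, ψ (v * (t * t)) = ∑ t : k with t * t = s, ψ (v * s) :=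
      Finset.sum_congr rfl fun t ht => by rw [(Finset.mem_filter.1 ht).2]
    rw [h2, Finset.sum_const, nsmul_eq_mul]
    have h3 := quadraticChar_card_sqrts hk s
    have h4 : ({x : k | x ^ 2 = s}.toFinset) = Finset.univ.filter (fun t : k => t * t = s) := by
      ext t; simp [sq]
    rw [h4] at h3
    have h5 : ((Finset.univ.filter (fun t : k => t * t = s)).card : ℂ) = (quadraticChar k s : ℂ) + 1 := by
      exact_mod_cast h3
    rw [h5]; ring
  rw [key _ (mul_ne_zero hα0 hw), key _ hw, ← Finset.sum_neg_distrib]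
  refine Fintype.sum_equiv (Equiv.mulLeft₀ α hα0) _ _ (fun x => ?_)
  have : quadraticChar k α = -1 := quadraticChar_neg_one_iff_not_isSquare.2 hα
  rw [show (Equiv.mulLeft₀ α hα0) x = α * x from rfl, map_mul (quadraticChar k), this]
  rw [show w * (α * x) = α * w * x by ring]
  push_cast; ring

lemma addChar_map_sum {k ι : Type*} [AddCommGroup k] (ψ : AddChar k ℂ) (s : Finset ι) (f : ι → k) :
    ψ (∑ i ∈ s, f i) = ∏ i ∈ s, ψ (f i) := by
  classical
  induction s using Finset.induction_on with
  | empty => simp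
  | insert a s ha ih => rw [Finset.sum_insert ha, Finset.prod_insert ha, AddChar.map_add_eq_mul, ih]

lemma qsum_eq {k V : Type*} [Field k] [Fintype k] [AddCommGroup V] [Module k V] [Fintype V]
    (hk : ringChar k ≠ 2) (ψ : AddChar k ℂ) (hψ : ψ ≠ 1) (Q : QuadraticForm k V)
    (hQ : ∀ u, (∀ v, QuadraticMap.polar Q u v = 0) → u = 0)
    (he : Even (Module.finrank k V)) (α : k) (hα : ¬ IsSquare α) :
    ∑ x : V, ψ (α * Q x) = ∑ x : V, ψ (Q x) := by
  classical
  have h2 : (2 : k) ≠ 0 := Ring.two_ne_zero hk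
  let _ : Invertible (2 : k) := invertibleOfNonzero h2
  have hsep : (QuadraticMap.associated (R := k) Q).SeparatingLeft := by
    intro u hu
    apply hQ
    intro v
    have := hu v
    rw [QuadraticMap.associated_apply] at this
    have h3 := (smul_eq_zero_iff_eq (unitOfInvertible (⅟(2:k)))).1 this
    simpa [QuadraticMap.polar] using h3
  obtain ⟨w, ⟨e⟩⟩ := QuadraticForm.equivalent_weightedSumSquares_units_of_nondegenerate' Q hsep
  have key : ∀ β : k, ∑ x : V, ψ (β * Q x) = ∏ i, ∑ t : k, ψ (β * w i * (t * t)) := by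
    intro β
    rw [Finset.prod_univ_sum, Fintype.piFinset_univ]
    refine Fintype.sum_equiv e.toLinearEquiv.toEquiv _ _ (fun x => ?_)
    rw [← e.map_app x, QuadraticMap.weightedSumSquares_apply, Finset.mul_sum, addChar_map_sum]
    refine Finset.prod_congr rfl fun i _ => ?_
    rw [Units.smul_def, smul_eq_mul, mul_assoc]
    rfl
  have k1 := key 1
  simp only [one_mul] at k1
  rw [key, k1, Finset.prod_congr rfl fun i _ => gsum_neg hk ψ hψ α (w i) hα (w i).ne_zero,
    Finset.prod_neg]
  simp [he.neg_one_pow]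

lemma main_aux {k V : Type*} [Field k] [Fintype k] [AddCommGroup V] [Module k V] [Fintype V]
    (hk : ringChar k ≠ 2) (Q : QuadraticMap k V V)
    (hB : ∀ u v, QuadraticMap.polar Q u v = 0 → u = 0 ∨ v = 0)
    (he : Even (Module.finrank k V)) (α : k) (hα : ¬ IsSquare α) (x₀ : V) :
    ∃ y, Q y = α • Q x₀ := by
  classical
  obtain ⟨ψ, hψ⟩ : ∃ ψ : AddChar k ℂ, ψ ≠ 1 := by
    obtain ⟨ψ, h⟩ := AddChar.exists_apply_ne_zero.2 (one_ne_zero (α := k))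
    exact ⟨ψ, fun h' => h (by simp [h'])⟩
  have : Finite (Module.Dual k V) := Module.finite_of_finite k
  have : Fintype (Module.Dual k V) := Fintype.ofFinite _
  have hdet : ∀ w : V, ∑ l : Module.Dual k V, ψ (l w) = if w = 0 then (Fintype.card (Module.Dual k V) : ℂ) else 0 := by
    intro w
    split_ifs with h
    · simp [h]
    · let χ : AddChar (Module.Dual k V) ℂ := ψ.compAddMonoidHom ((Module.Dual.eval k V w).toAddMonoidHom)
      have : ∑ l, χ l = 0 := by
        rw [AddChar.sum_eq_zero_iff_ne_zero]
        intro hχ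
        apply hψ
        obtain ⟨l, hl⟩ : ∃ l : Module.Dual k V, l w ≠ 0 := by
          by_contra! hh
          exact h ((Module.forall_dual_apply_eq_zero_iff k w).1 hh)
        ext c
        have := congrArg (fun f : AddChar (Module.Dual k V) ℂ => f ((c * (l w)⁻¹) • l)) hχ
        simpa [χ, hl] using this
      exact this
  have hsum : ∀ l : Module.Dual k V, ∑ x, ψ (l (α • Q x)) = ∑ x, ψ (l (Q x)) := by
    intro l
    by_cases hl : l = 0
    · simp [hl]
    have := qsum_eq hk ψ hψ (l.compQuadraticMap Q) ?_ he α hα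
    · simpa using this
    intro u hu
    by_contra hu0
    apply hl
    have hinj : Function.Injective (Q.polarBilin u) := by
      rw [injective_iff_map_eq_zero]
      intro v hv
      exact (hB u v hv).resolve_left hu0
    have hsurj := Finite.surjective_of_injective hinj
    ext w
    obtain ⟨v, rfl⟩ := hsurj w
    have := hu v
    simpa [QuadraticMap.polar] using this
  have hcount : ∀ f : V → V, ∀ w, ∑ l : Module.Dual k V, ψ (-(l w)) * ∑ x, ψ (l (f x)) =
      ((Finset.univ.filter (fun x => f x = w)).card : ℂ) * Fintype.card (Module.Dual k V) := by
    intro f w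
    simp_rw [Finset.mul_sum]
    rw [Finset.sum_comm]
    have : ∀ x, ∑ l : Module.Dual k V, ψ (-(l w)) * ψ (l (f x)) = if f x = w then (Fintype.card (Module.Dual k V) : ℂ) else 0 := by
      intro x
      have := hdet (f x - w)
      simp_rw [sub_eq_zero] at this
      rw [← this]
      refine Finset.sum_congr rfl fun l _ => ?_
      rw [← AddChar.map_add_eq_mul, map_sub]; congr 1; ring
    simp_rw [this]
    rw [← Finset.sum_filter, Finset.sum_const, nsmul_eq_mul]
  have h1 := hcount Q (α • Q x₀)
  have h2 := hcount (fun x => α • Q x) (α • Q x₀)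
  simp_rw [hsum] at h2
  rw [h1] at h2
  have h3 := mul_right_cancel₀ (by exact_mod_cast Fintype.card_ne_zero) h2
  have h4 : (Finset.univ.filter (fun x => Q x = α • Q x₀)).card ≠ 0 := by
    rw [Nat.cast_injective h3]
    exact Finset.card_ne_zero_of_mem (a := x₀) (by simp)
  obtain ⟨y, hy⟩ := Finset.card_pos.1 (Nat.pos_of_ne_zero h4)
  exact ⟨y, by simpa using hy⟩

theorem stmt15 {p m k n : ℕ} (hp : p.Prime) (hpodd : Odd p) (hm : 0 < m)
    {K : Type*} [Field K] [Fintype K] (hK : Fintype.card K = p ^ m)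
    (F : (Fin n → K) → (Fin n → K)) (hSQH : IsSQH (p ^ k) F)
    (hzero : ∀ x, F x = 0 ↔ x = 0)
    (h2 : ∀ x : Fin n → K, x ≠ 0 → {y : Fin n → K | y ≠ 0 ∧ F y = F x}.ncard = 2)
    (α : K) (hα : α ≠ 0)
    (h : Even n ∨ ∃ μ : K, μ ≠ 0 ∧ α = μ ^ 2) :
    (fun w : Fin n → K => α • w) '' Set.range F = Set.range F := by
  classical
  have hF : Fact p.Prime := ⟨hp⟩
  have hchar : CharP K p := charP_of_card_eq_prime_pow hK
  have hp2 : p ≠ 2 := by rintro rfl; exact absurd hpodd (by decide)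
  have hrc : ringChar K ≠ 2 := by rw [ringChar.eq K p]; exact hp2
  have h20 : (2 : K) ≠ 0 := Ring.two_ne_zero hrc
  have hsodd : Odd (p ^ k) := hpodd.pow
  have hs1 : Even (p ^ k + 1) := hsodd.add_one
  have hhom : ∀ (c : K) (x : Fin n → K), F (c • x) = c ^ (p ^ k + 1) • F x := by
    intro c x; ext i; simpa using (hSQH i).1 c x
  suffices hmain : ∀ β : K, β ≠ 0 → (Even n ∨ ∃ μ : K, μ ≠ 0 ∧ β = μ ^ 2) →
      ∀ x, ∃ y, F y = β • F x by
    ext w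
    constructor
    · rintro ⟨_, ⟨x, rfl⟩, rfl⟩
      exact hmain α hα h x
    · rintro ⟨x, rfl⟩
      obtain ⟨y, hy⟩ := hmain α⁻¹ (inv_ne_zero hα)
        (h.imp id (by rintro ⟨μ, h0, rfl⟩; exact ⟨μ⁻¹, inv_ne_zero h0, by simp⟩)) x
      exact ⟨_, ⟨y, rfl⟩, by simp [hy, smul_smul, hα]⟩
  intro β hβ hcase x₀
  by_cases hn : n = 0
  · subst hn; exact ⟨0, Subsingleton.elim _ _⟩
  have hneg : ∀ x, F (-x) = F x := by
    intro x
    have := hhom (-1) x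
    rwa [hs1.neg_one_pow, neg_one_smul, one_smul] at this
  have hnegne : ∀ x : Fin n → K, x ≠ 0 → x ≠ -x := by
    intro x hx hxx
    apply hx
    ext i
    have h1 := congrFun hxx i
    have h3 : (2 : K) * x i = 0 := by
      rw [Pi.neg_apply] at h1
      linear_combination h1
    simpa [h20] using h3
  have hfib : ∀ x y : Fin n → K, x ≠ 0 → F y = F x → y = x ∨ y = -x := by
    intro x y hx hxy
    have hsub : ({x, -x} : Set (Fin n → K)) ⊆ {y | y ≠ 0 ∧ F y = F x} := by
      rintro z (rfl | rfl)
      · exact ⟨hx, rfl⟩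
      · exact ⟨neg_ne_zero.2 hx, hneg x⟩
    have heq := Set.eq_of_subset_of_ncard_le hsub
      (by rw [h2 x hx, Set.ncard_pair (hnegne x hx)]) (Set.toFinite _)
    have hy : y ∈ {y | y ≠ 0 ∧ F y = F x} :=
      ⟨fun h0 => hx ((hzero x).1 (by rw [← hxy]; exact (hzero y).2 h0)), hxy⟩
    rw [← heq] at hy
    simpa using hy
  have hker : ∀ c : K, c ^ (p ^ k + 1) = 1 → c = 1 ∨ c = -1 := by
    intro c hc
    let i₀ : Fin n := ⟨0, Nat.pos_of_ne_zero hn⟩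
    let x : Fin n → K := fun _ => 1
    have hx : x ≠ 0 := fun h0 => one_ne_zero (congrFun h0 i₀)
    rcases hfib x (c • x) hx (by rw [hhom, hc, one_smul]) with h1 | h1
    · left; simpa [x] using congrFun h1 i₀
    · right; simpa [x] using congrFun h1 i₀
  -- squares are (σ+1)-th powers
  have hsq : ∀ μ : K, μ ≠ 0 → ∃ c : K, c ≠ 0 ∧ μ ^ 2 = c ^ (p ^ k + 1) := by
    obtain ⟨e, he⟩ := hs1
    have he2 : p ^ k + 1 = 2 * e := by omega
    let S : Set K := {x | ∃ μ : K, μ ≠ 0 ∧ x = μ ^ 2}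
    have hmaps : Set.MapsTo (fun x : K => x ^ e) S S := by
      rintro _ ⟨μ, h0, rfl⟩
      exact ⟨μ ^ e, pow_ne_zero _ h0, by ring⟩
    have hinj : Set.InjOn (fun x : K => x ^ e) S := by
      rintro _ ⟨μ, h0, rfl⟩ _ ⟨ν, h1, rfl⟩ hh
      have hh' : μ ^ (p ^ k + 1) = ν ^ (p ^ k + 1) := by
        rw [he2, pow_mul, pow_mul]; exact hh
      have := hker (μ / ν) (by rw [div_pow, hh', div_self (pow_ne_zero _ h1)])
      rcases this with h3 | h3
      · rw [div_eq_iff h1] at h3; rw [h3]; ring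
      · rw [div_eq_iff h1] at h3; rw [h3]; ring
    have hsurj : Set.SurjOn (fun x : K => x ^ e) S S :=
      ((Set.toFinite S).injOn_iff_bijOn_of_mapsTo hmaps).1 hinj |>.surjOn
    intro μ hμ
    obtain ⟨_, ⟨c, hc, rfl⟩, h3⟩ := hsurj ⟨μ, hμ, rfl⟩
    exact ⟨c, hc, by rw [he2, pow_mul]; exact h3.symm⟩
  have hsqInv : ∀ μ : K, μ ≠ 0 → ∀ x, ∃ y, F y = μ ^ 2 • F x := by
    intro μ hμ x
    obtain ⟨c, -, hc⟩ := hsq μ hμ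
    exact ⟨c • x, by rw [hhom, hc]⟩
  by_cases hβsq : IsSquare β
  · obtain ⟨μ, rfl⟩ := hβsq
    have hμ : μ ≠ 0 := by rintro rfl; simp at hβ
    obtain ⟨y, hy⟩ := hsqInv μ hμ x₀
    exact ⟨y, by rw [hy, sq]⟩
  have hne : Even n := by
    rcases hcase with h1 | ⟨μ, -, rfl⟩
    · exact h1
    · exact absurd (IsSquare.sq μ) hβsq
  -- the fixed field of σ
  let φ : K →+* K := iterateFrobenius K p k
  have hφ : ∀ x, φ x = x ^ p ^ k := fun x => rfl
  let K0 : Subfield K := RingHom.eqLocusField φ (RingHom.id K)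
  have hK0 : ∀ x, x ∈ K0 ↔ x ^ p ^ k = x := fun x => Iff.rfl
  have hchar0 : CharP K0 p := (algebraMap K0 K).charP (algebraMap K0 K).injective p
  have hrc0 : ringChar K0 ≠ 2 := by rw [ringChar.eq K0 p]; exact hp2
  obtain ⟨a, ha⟩ := FiniteField.exists_nonsquare hrc0
  have haK : ¬ IsSquare (a : K) := by
    rintro ⟨μ, hμ⟩
    have haφ : φ (a : K) = a := a.2
    have hμK0 : φ μ ≠ μ := by
      intro h1
      exact ha ⟨⟨μ, h1⟩, Subtype.ext hμ⟩
    have h1 : φ μ * φ μ = μ * μ := by rw [← map_mul, ← hμ, haφ]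
    have h3 : φ μ = -μ := (mul_self_eq_mul_self_iff.1 h1).resolve_left hμK0
    have hμ0 : μ ≠ 0 := by rintro rfl; exact hμK0 (map_zero φ)
    have hp1 : 1 + μ ≠ 0 := by
      intro h4
      apply hμK0
      rw [show μ = -1 by linear_combination h4]; simp
    have hm1 : 1 - μ ≠ 0 := by
      intro h4
      apply hμK0
      rw [show μ = 1 by linear_combination -h4]; simp
    have hc : ((1 - μ) / (1 + μ)) ^ (p ^ k + 1) = 1 := by
      rw [pow_succ, ← hφ, map_div₀, map_sub, map_add, map_one, h3, sub_neg_eq_add, ← sub_eq_add_neg]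
      field_simp
    rcases hker _ hc with h5 | h5
    · rw [div_eq_iff hp1] at h5
      have : (2 : K) * μ = 0 := by linear_combination -h5
      simp [h20, hμ0] at this
    · rw [div_eq_iff hp1] at h5
      exact h20 (by linear_combination h5)
  have ha0 : (a : K) ≠ 0 := fun h0 => haK (by rw [h0]; exact IsSquare.zero)
  have hratio : ∃ μ : K, μ ≠ 0 ∧ β = μ ^ 2 * a := by
    have h1 : quadraticChar K (β * (a : K)) = 1 := by
      rw [map_mul, quadraticChar_neg_one_iff_not_isSquare.2 hβsq,
        quadraticChar_neg_one_iff_not_isSquare.2 haK]; norm_num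
    obtain ⟨ν, hν⟩ := (quadraticChar_one_iff_isSquare (mul_ne_zero hβ ha0)).1 h1
    have hν0 : ν ≠ 0 := by rintro rfl; simp [hβ, ha0] at hν
    refine ⟨ν / a, div_ne_zero hν0 ha0, ?_⟩
    field_simp
    linear_combination hν
  -- F as a quadratic map over K0
  have hB : ∀ u v : Fin n → K, F (u + v) - F u - F v = 0 → u = 0 ∨ v = 0 := by
    intro u v huv
    have h1 : F (u - v) = F (u + v) := by
      ext i
      obtain ⟨-, b, b1, b2, b3, b4, b5⟩ := hSQH i
      have e1 := b5 u v
      have e2 := b5 u (-v)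
      have e3 := b3 (-1) v u
      have e4 := b4 (-1) u v
      have e5 := congrFun huv i
      rw [hneg, ← sub_eq_add_neg] at e2
      rw [neg_one_smul] at e3 e4
      rw [hsodd.neg_one_pow] at e4
      simp only [Pi.sub_apply, Pi.zero_apply] at e5
      linear_combination e2 + e3 + e4 + e1 - 2 * e5
    have hdbl : ∀ z : Fin n → K, z = -z → z = 0 := fun z hz => by
      by_contra h0; exact hnegne z h0 hz
    by_cases h0 : u + v = 0
    · left
      rw [h0, (hzero 0).2 rfl, hzero] at h1
      apply hdbl
      linear_combination (exp := 1) h0 + h1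
    · rcases hfib _ _ h0 h1 with h3 | h3
      · right; apply hdbl; linear_combination (exp := 1) -h3
      · left; apply hdbl; linear_combination (exp := 1) h3
  have hcomp : ∃ B : LinearMap.BilinMap K0 (Fin n → K) (Fin n → K),
      ∀ x y, F (x + y) = F x + F y + B x y := by
    have hb : ∀ (x y : Fin n → K) i, (F (x + y) - F x - F y) i =
        (hSQH i).2.choose x y + (hSQH i).2.choose y x :=
      fun x y i => (hSQH i).2.choose_spec.2.2.2.2 x y
    refine ⟨LinearMap.mk₂ K0 (fun x y => F (x + y) - F x - F y) ?_ ?_ ?_ ?_, ?_⟩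
    · intro x x' y
      ext i
      obtain ⟨b1, b2, b3, b4, -⟩ := (hSQH i).2.choose_spec
      rw [Pi.add_apply, hb, hb, hb, b1, b2]; ring
    · intro c x y
      ext i
      obtain ⟨b1, b2, b3, b4, -⟩ := (hSQH i).2.choose_spec
      have hc := (hK0 c).1 c.2
      rw [Pi.smul_apply, hb, hb, Subfield.smul_def, Subfield.smul_def, b3, b4, hc, smul_eq_mul]; ring
    · intro x x' y
      ext i
      obtain ⟨b1, b2, b3, b4, -⟩ := (hSQH i).2.choose_spec
      rw [Pi.add_apply, hb, hb, hb, b1, b2]; ring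
    · intro c x y
      ext i
      obtain ⟨b1, b2, b3, b4, -⟩ := (hSQH i).2.choose_spec
      have hc := (hK0 c).1 c.2
      rw [Pi.smul_apply, hb, hb, Subfield.smul_def, Subfield.smul_def, b3, b4, hc, smul_eq_mul]; ring
    · intro x y
      rw [LinearMap.mk₂_apply]; abel
  let Q : QuadraticMap K0 (Fin n → K) (Fin n → K) :=
    { toFun := F
      toFun_smul := by
        intro c x
        have hc := (hK0 c).1 c.2
        rw [Subfield.smul_def, hhom, pow_succ, hc]; rfl
      exists_companion' := hcomp }
  have heven : Even (Module.finrank K0 (Fin n → K)) := by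
    rw [← Module.finrank_mul_finrank K0 K (Fin n → K), Module.finrank_fin_fun]
    exact hne.mul_left _
  obtain ⟨y, hy⟩ := main_aux hrc0 Q hB heven a ha x₀
  obtain ⟨μ, hμ, hβμ⟩ := hratio
  obtain ⟨z, hz⟩ := hsqInv μ hμ y
  refine ⟨z, ?_⟩
  have hy' : F y = (a : K) • F x₀ := hy
  rw [hz, hy', smul_smul, hβμ]
end

section
/- Let q = p^m be odd and let F : F_q^n → F_q^n be a σ-semiquadratic homogeneous map (F ∈ SQH(n,q)) with companion automorphism σ = p^k such that F(x) = 0 ⟺ x = 0 and F is 2-to-1 on F_q^n∖{0}. Let α ∈ F_q^×. If n is odd and α is a non-square in F_q^×, then α·Im(F) ∩ Im(F) = {0}, where Im(F) = {F(x) : x ∈ F_q^n} and α·Im(F) = {α·w : w ∈ Im(F)}. -/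
theorem gs_pair {k : Type*} [Field k] [Fintype k] (h2 : ringChar k ≠ 2) (α : k)
    (hα : ¬ IsSquare α) (f : k → ℂ) :
    ∑ c : k, f (c ^ 2) + ∑ c : k, f (α * c ^ 2) = 2 * ∑ t : k, f t := by
  classical
  have hα0 : α ≠ 0 := by rintro rfl; exact hα ⟨0, by simp⟩
  have key : ∀ g : k → k, ∑ c : k, f (g c) =
      ∑ t : k, ((Finset.univ.filter (fun c => g c = t)).card : ℂ) * f t := by
    intro g
    rw [← Finset.sum_fiberwise Finset.univ g]
    refine Finset.sum_congr rfl fun t _ => ?_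
    rw [Finset.sum_congr rfl (g := fun _ => f t)]
    · simp
    · intro x hx
      simp at hx
      rw [hx]
  rw [key (fun c => c ^ 2), key (fun c => α * c ^ 2), ← Finset.sum_add_distrib, Finset.mul_sum]
  refine Finset.sum_congr rfl fun t _ => ?_
  rw [← add_mul]
  congr 1
  have h1 := quadraticChar_card_sqrts h2 t
  have h3 := quadraticChar_card_sqrts h2 (α⁻¹ * t)
  have e1 : (Finset.univ.filter (fun c : k => c ^ 2 = t)) = {x : k | x ^ 2 = t}.toFinset := by
    ext; simp
  have e2 : (Finset.univ.filter (fun c : k => α * c ^ 2 = t)) =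
      {x : k | x ^ 2 = α⁻¹ * t}.toFinset := by
    ext; simp [eq_inv_mul_iff_mul_eq₀ hα0]
  have hq : quadraticChar k α⁻¹ = -1 := by
    rw [quadraticChar_neg_one_iff_not_isSquare]
    simpa using hα
  rw [map_mul, hq] at h3
  rw [e1, e2]
  have : (({x : k | x ^ 2 = t}.toFinset.card : ℤ) +
      ({x : k | x ^ 2 = α⁻¹ * t}.toFinset.card : ℤ)) = 2 := by
    rw [h1, h3]; ring
  exact_mod_cast this

theorem gs_neg {k : Type*} [Field k] [Fintype k] (h2 : ringChar k ≠ 2) (α : k)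
    (hα : ¬ IsSquare α) (ψ : AddChar k ℂ) (hψ : ψ.IsPrimitive) (a : k) (ha : a ≠ 0) :
    ∑ c : k, ψ (α * (a * c ^ 2)) = - ∑ c : k, ψ (a * c ^ 2) := by
  have := gs_pair h2 α hα (fun t => ψ (a * t))
  have h0 : ∑ t : k, ψ (a * t) = 0 := AddChar.sum_eq_zero_of_ne_one (hψ ha)
  rw [h0] at this
  rw [eq_neg_iff_add_eq_zero, add_comm, ← mul_zero 2, ← this]
  simp only [mul_left_comm]

open QuadraticMap in
theorem qs_neg {k V : Type*} [Field k] [Fintype k] [AddCommGroup V] [Module k V] [Fintype V]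
    (h2 : ringChar k ≠ 2) (α : k)
    (hα : ¬ IsSquare α) (ψ : AddChar k ℂ) (hψ : ψ.IsPrimitive)
    (hodd : Odd (Module.finrank k V)) (Q : QuadraticForm k V)
    (hQ : ∀ x, (∀ y, polar Q x y = 0) → x = 0) :
    ∑ x : V, ψ (α * Q x) = - ∑ x : V, ψ (Q x) := by
  classical
  have h2' : (2 : k) ≠ 0 := Ring.two_ne_zero h2
  let _ : Invertible (2 : k) := invertibleOfNonzero h2'
  have : FiniteDimensional k V := Module.Finite.of_finite
  have hs : (associated (R := k) Q).SeparatingLeft := by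
    intro x hx
    apply hQ x
    intro y
    have := hx y
    rw [← polarBilin_apply_apply, ← two_nsmul_associated k Q, LinearMap.smul_apply,
      LinearMap.smul_apply, this, smul_zero]
  obtain ⟨w, ⟨e⟩⟩ := Q.equivalent_weightedSumSquares_units_of_nondegenerate' hs
  have key : ∀ β : k, ∑ x : V, ψ (β * Q x) =
      ∏ i, ∑ c : k, ψ (β * ((w i : k) * c ^ 2)) := by
    intro β
    rw [Finset.prod_univ_sum, Fintype.piFinset_univ]
    refine Fintype.sum_equiv e.toLinearEquiv.toEquiv _ _ fun x => ?_
    have h1 : Q x = ∑ i, (w i : k) * (e x i) ^ 2 := by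
      rw [← e.map_app x, weightedSumSquares_apply]
      simp [Units.smul_def, pow_two]
    rw [h1, Finset.mul_sum]
    have h3 : ∀ (s : Finset (Fin (Module.finrank k V))) (g : Fin (Module.finrank k V) → k),
        ψ (∑ i ∈ s, g i) = ∏ i ∈ s, ψ (g i) := by
      intro s g
      induction s using Finset.induction_on with
      | empty => simp
      | insert a s ha ih =>
        rw [Finset.sum_insert ha, Finset.prod_insert ha, AddChar.map_add_eq_mul, ih]
    rw [h3]
    rfl
  have k1 := key 1
  simp only [one_mul] at k1
  rw [k1, key α, Finset.prod_congr rfl (fun i _ => gs_neg h2 α hα ψ hψ (w i) (w i).ne_zero),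
    Finset.prod_neg]
  simp [hodd.neg_one_pow]

open QuadraticMap in
theorem count_two {k V : Type*} [Field k] [Fintype k] [AddCommGroup V] [Module k V] [Fintype V]
    [DecidableEq V]
    (h2 : ringChar k ≠ 2) (α : k) (hα : ¬ IsSquare α)
    (hodd : Odd (Module.finrank k V)) (Q : QuadraticMap k V V)
    (hQ : ∀ x y, polar Q x y = 0 → x = 0 ∨ y = 0) (w : V) :
    (Finset.univ.filter (fun x => Q x = w)).card +
      (Finset.univ.filter (fun x => α • Q x = w)).card = 2 := by
  classical
  have : FiniteDimensional k V := Module.Finite.of_finite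
  have : Finite (Module.Dual k V) := Module.finite_of_finite k
  let _ : Fintype (Module.Dual k V) := Fintype.ofFinite _
  let ψ := AddChar.FiniteField.primitiveChar_to_Complex k
  have hψ : ψ.IsPrimitive := AddChar.FiniteField.primitiveChar_to_Complex_isPrimitive k
  have hψ1 : ∃ a, ψ a ≠ 1 := by
    have := hψ (one_ne_zero)
    rw [AddChar.ne_one_iff] at this
    obtain ⟨a, ha⟩ := this
    exact ⟨a, by simpa using ha⟩
  -- orthogonality
  have orth : ∀ v : V, ∑ l : Module.Dual k V, ψ (l v) =
      if v = 0 then (Fintype.card (Module.Dual k V) : ℂ) else 0 := by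
    intro v
    split_ifs with hv
    · simp [hv]
    · obtain ⟨l, hl⟩ : ∃ l : Module.Dual k V, l v ≠ 0 := by
        by_contra! h
        exact hv ((Module.forall_dual_apply_eq_zero_iff k v).1 h)
      obtain ⟨a, ha⟩ := hψ1
      let χ : AddChar (Module.Dual k V) ℂ :=
        { toFun := fun l => ψ (l v)
          map_zero_eq_one' := by simp
          map_add_eq_mul' := by intro a b; simp [AddChar.map_add_eq_mul] }
      have hχ : χ ≠ 1 := by
        rw [AddChar.ne_one_iff]
        refine ⟨(a * (l v)⁻¹) • l, ?_⟩
        change ψ (((a * (l v)⁻¹) • l) v) ≠ 1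
        rw [LinearMap.smul_apply, smul_eq_mul, inv_mul_cancel_right₀ hl]
        exact ha
      exact AddChar.sum_eq_zero_of_ne_one hχ
  have cnt : ∀ g : V → V, (Fintype.card (Module.Dual k V) : ℂ) *
      (Finset.univ.filter (fun x => g x = w)).card =
      ∑ l : Module.Dual k V, ψ (-(l w)) * ∑ x, ψ (l (g x)) := by
    intro g
    simp_rw [Finset.mul_sum]
    rw [Finset.sum_comm]
    have : ∀ x, ∑ l : Module.Dual k V, ψ (-(l w)) * ψ (l (g x)) =
        if g x = w then (Fintype.card (Module.Dual k V) : ℂ) else 0 := by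
      intro x
      have := orth (g x - w)
      simp only [sub_eq_zero] at this
      rw [← this]
      refine Finset.sum_congr rfl fun l _ => ?_
      rw [← AddChar.map_add_eq_mul, map_sub]
      congr 1; ring
    simp_rw [this]
    rw [← Finset.sum_filter, Finset.sum_const, nsmul_eq_mul, mul_comm]
  have hz : ∀ l : Module.Dual k V, l ≠ 0 →
      ∑ x, ψ (l (α • Q x)) = - ∑ x, ψ (l (Q x)) := by
    intro l hl
    have := qs_neg h2 α hα ψ hψ hodd (l.compQuadraticMap Q) (by
      intro x hx
      by_contra hx0
      apply hl
      have hinj : Function.Injective (polarBilin Q x) := by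
        rw [← LinearMap.ker_eq_bot, LinearMap.ker_eq_bot']
        intro y hy
        exact (hQ x y hy).resolve_left hx0
      have hsurj := LinearMap.injective_iff_surjective.1 hinj
      ext v
      obtain ⟨y, rfl⟩ := hsurj v
      have := hx y
      simpa [polar] using this)
    simpa using this
  have c1 := cnt Q
  have c2 := cnt (fun x => α • Q x)
  have hcard : Fintype.card (Module.Dual k V) = Fintype.card V := by
    rw [Module.card_eq_pow_finrank (K := k), Module.card_eq_pow_finrank (K := k) (V := V),
      Subspace.dual_finrank_eq]
  have tot : (Fintype.card (Module.Dual k V) : ℂ) *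
      ((Finset.univ.filter (fun x => Q x = w)).card +
      (Finset.univ.filter (fun x => α • Q x = w)).card) =
      (Fintype.card (Module.Dual k V) : ℂ) * 2 := by
    rw [mul_add, c1, c2, ← Finset.sum_add_distrib, Finset.sum_eq_single 0]
    · simp [hcard]; ring
    · intro l _ hl
      rw [hz l hl]; ring
    · simp
  have := mul_left_cancel₀ (by simp) tot
  exact_mod_cast this

theorem gcd_dvd_two {K : Type*} [Field K] [Fintype K] (s : ℕ)
    (h : ∀ c : K, c ^ s = 1 → c = 1 ∨ c = -1) :
    Nat.gcd s (Fintype.card K - 1) ∣ 2 := by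
  classical
  obtain ⟨g, hg⟩ := IsCyclic.exists_ofOrder_eq_natCard (α := Kˣ)
  rw [Nat.card_eq_fintype_card, Fintype.card_units] at hg
  have hpos : 0 < Fintype.card K - 1 := by
    have := Fintype.one_lt_card (α := K); omega
  set N := Fintype.card K - 1
  have hd : Nat.gcd s N ∣ N := Nat.gcd_dvd_right _ _
  have hgp : 0 < Nat.gcd s N := Nat.gcd_pos_of_pos_right _ hpos
  obtain ⟨e, he⟩ := hd
  have he0 : e ≠ 0 := by rintro rfl; omega
  have ho : orderOf (g ^ e) = Nat.gcd s N := by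
    rw [orderOf_pow_of_dvd he0 (by rw [hg]; exact ⟨_, he.trans (mul_comm _ _)⟩), hg]
    exact Nat.div_eq_of_eq_mul_left (Nat.pos_of_ne_zero he0) he
  have h1 : (g ^ e) ^ s = 1 := by
    rw [← orderOf_dvd_iff_pow_eq_one, ho]; exact Nat.gcd_dvd_left _ _
  rw [← ho, orderOf_dvd_iff_pow_eq_one]
  ext
  have h3 : ((g ^ e : Kˣ) : K) ^ s = 1 := by
    rw [← Units.val_pow_eq_pow_val, h1, Units.val_one]
  rw [Units.val_pow_eq_pow_val]
  rcases h _ h3 with h | h <;> rw [h] <;> simp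

theorem sq_is_pow {K : Type*} [Field K] [Fintype K] (s : ℕ)
    (h : Nat.gcd s (Fintype.card K - 1) ∣ 2) (u : K) (hu : u ≠ 0) :
    ∃ c : K, c ≠ 0 ∧ c ^ s = u ^ 2 := by
  classical
  obtain ⟨e, he⟩ := h
  have hb := Nat.gcd_eq_gcd_ab s (Fintype.card K - 1)
  set A := Nat.gcdA s (Fintype.card K - 1)
  set B := Nat.gcdB s (Fintype.card K - 1)
  refine ⟨(u ^ e) ^ A, zpow_ne_zero _ (pow_ne_zero _ hu), ?_⟩
  have h1 : (u ^ e) ^ (Fintype.card K - 1) = 1 :=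
    FiniteField.pow_card_sub_one_eq_one _ (pow_ne_zero _ hu)
  have hue : u ^ e ≠ 0 := pow_ne_zero _ hu
  rw [he, mul_comm, pow_mul]
  rw [← zpow_natCast (u ^ e) (Nat.gcd _ _), hb, zpow_add₀ hue, zpow_mul, zpow_mul _ (_ : ℤ) B,
    zpow_natCast, zpow_natCast, h1, one_zpow, mul_one, ← zpow_natCast, ← zpow_natCast,
    zpow_comm]
  simp only [zpow_natCast]

theorem odd_quot (p k m : ℕ) (hp : p.Prime) (hm : 0 < m)
    (h : Nat.gcd (p ^ k + 1) (p ^ m - 1) ∣ 2) : Odd (m / Nat.gcd k m) := by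
  by_contra hne
  rw [Nat.not_odd_iff_even] at hne
  have hd : 0 < Nat.gcd k m := Nat.gcd_pos_of_pos_right _ hm
  have hcop := Nat.coprime_div_gcd_div_gcd hd
  have hkodd : Odd (k / Nat.gcd k m) := by
    rw [← Nat.not_even_iff_odd]
    intro hk
    have := Nat.dvd_gcd hk.two_dvd hne.two_dvd
    rw [hcop] at this
    omega
  have hk := Nat.mul_div_cancel' (Nat.gcd_dvd_left k m)
  have hm' := Nat.mul_div_cancel' (Nat.gcd_dvd_right k m)
  set d := Nat.gcd k m
  have h1 : p ^ d + 1 ∣ p ^ k + 1 := by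
    have := Odd.nat_add_dvd_pow_add_pow (p ^ d) 1 hkodd
    rwa [one_pow, ← pow_mul, hk] at this
  have h2 : p ^ d + 1 ∣ p ^ m - 1 := by
    obtain ⟨r, hr⟩ := hne.two_dvd
    have a1 : p ^ (d * 2) - 1 ∣ p ^ m - 1 :=
      Nat.pow_sub_one_dvd_pow_sub_one p ⟨r, by rw [← hm', hr]; ring⟩
    refine Dvd.dvd.trans ⟨p ^ d - 1, ?_⟩ a1
    rw [pow_mul, ← Nat.sq_sub_sq, one_pow]
  have h3 := Nat.le_of_dvd (by norm_num) ((Nat.dvd_gcd h1 h2).trans h)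
  have h4 : p ≤ p ^ d := Nat.le_self_pow hd.ne' p
  have := hp.two_le
  omega

theorem odd_geom (q r : ℕ) (hq : Odd q) (hr : Odd r) : Odd (∑ i ∈ Finset.range r, q ^ i) := by
  rw [Finset.odd_sum_iff_odd_card_odd]
  rw [Finset.filter_true_of_mem (fun i _ => hq.pow)]
  simpa using hr

/-- for odd `q`, `F ∈ SQH(n,q)` vanishing only at `0` and 2-to-1
on `F_q^n ∖ {0}`, and `α ∈ F_q^×`: if `n` is odd and `α` is a non-square in
`F_q^×`, then `α·Im(F) ∩ Im(F) = {0}`. -/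
theorem stmt16 {p m k n : ℕ} (hp : p.Prime) (hpodd : Odd p) (hm : 0 < m)
    {K : Type*} [Field K] [Fintype K] (hK : Fintype.card K = p ^ m)
    (F : (Fin n → K) → (Fin n → K)) (hSQH : IsSQH (p ^ k) F)
    (hzero : ∀ x, F x = 0 ↔ x = 0)
    (h2 : ∀ x : Fin n → K, x ≠ 0 → {y : Fin n → K | y ≠ 0 ∧ F y = F x}.ncard = 2)
    (α : K) (hα : α ≠ 0)
    (hn : Odd n) (hns : ∀ μ : K, μ ≠ 0 → α ≠ μ ^ 2) :
    ((fun w : Fin n → K => α • w) '' Set.range F) ∩ Set.range F = {0} := by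
  classical
  have hpf : Fact p.Prime := ⟨hp⟩
  have hchar : CharP K p := charP_of_card_eq_prime_pow hK
  have hp2 : p ≠ 2 := by rintro rfl; exact absurd hpodd (by decide)
  have h20 : (2 : K) ≠ 0 := Ring.two_ne_zero (by rw [ringChar.eq K p]; exact hp2)
  have hσ : Even (p ^ k + 1) := hpodd.pow.add_one
  have hhom : ∀ (c : K) x, F (c • x) = c ^ (p ^ k + 1) • F x := by
    intro c x; ext i; exact (hSQH i).1 c x
  have hneg : ∀ x, F (-x) = F x := by
    intro x
    have := hhom (-1) x
    rwa [hσ.neg_one_pow, one_smul, neg_one_smul] at this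
  have htwo : ∀ x : Fin n → K, x + x = 0 → x = 0 := by
    intro x hx
    rw [← two_smul K, smul_eq_zero] at hx
    exact hx.resolve_left h20
  have hfib : ∀ x : Fin n → K, x ≠ 0 →
      ({x, -x} : Set (Fin n → K)) = {y : Fin n → K | y ≠ 0 ∧ F y = F x} := by
    intro x hx
    refine Set.eq_of_subset_of_ncard_le ?_ ?_ (Set.toFinite _)
    · rintro y (rfl | rfl)
      · exact ⟨hx, rfl⟩
      · exact ⟨neg_ne_zero.2 hx, hneg x⟩
    · rw [h2 x hx, Set.ncard_pair]
      intro h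
      exact hx (htwo x (by nth_rewrite 1 [h]; simp))
  have hpm : ∀ x y : Fin n → K, x ≠ 0 → F y = F x → y = x ∨ y = -x := by
    intro x y hx h
    have hy : y ≠ 0 := by
      rintro rfl
      exact hx ((hzero x).1 (by rw [← h]; exact (hzero 0).2 rfl))
    have : y ∈ ({x, -x} : Set (Fin n → K)) := by rw [hfib x hx]; exact ⟨hy, h⟩
    simpa using this
  have hroot : ∀ c : K, c ^ (p ^ k + 1) = 1 → c = 1 ∨ c = -1 := by
    intro c hc
    have i0 : Fin n := ⟨0, hn.pos⟩
    have hx : (fun _ : Fin n => (1 : K)) ≠ 0 := fun h => one_ne_zero (congrFun h i0)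
    have := hpm _ (c • (fun _ : Fin n => (1 : K))) hx (by rw [hhom, hc, one_smul])
    rcases this with h | h
    · left; simpa using congrFun h i0
    · right; simpa using congrFun h i0
  have hg := gcd_dvd_two (p ^ k + 1) hroot
  have hro : Odd (m / Nat.gcd k m) := by
    rw [hK] at hg; exact odd_quot p k m hp hm hg
  have hd : Nat.gcd k m ≠ 0 := (Nat.gcd_pos_of_pos_right _ hm).ne'
  have hdk : Nat.gcd k m ∣ k := Nat.gcd_dvd_left _ _
  have hdm : Nat.gcd k m ∣ m := Nat.gcd_dvd_right _ _
  generalize Nat.gcd k m = d at hro hd hdk hdm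
  let _ : Algebra (ZMod p) K := ZMod.algebra K p
  obtain ⟨f⟩ : Nonempty (GaloisField p d →ₐ[ZMod p] K) := by
    apply FiniteField.nonempty_algHom_of_finrank_dvd
    have h1 := FiniteField.pow_finrank_eq_card p K
    rw [hK] at h1
    rw [GaloisField.finrank p hd, Nat.pow_right_injective hp.two_le h1]
    exact hdm
  let K₀ := GaloisField p d
  let _ : Fintype K₀ := Fintype.ofFinite _
  have hK₀ : Fintype.card K₀ = p ^ d := by
    rw [← Nat.card_eq_fintype_card]; exact GaloisField.card p d hd
  let _ : Algebra K₀ K := f.toRingHom.toAlgebra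
  have : FiniteDimensional K₀ K := Module.Finite.of_finite
  have hr : Module.finrank K₀ K = m / d := by
    have h1 := Module.card_eq_pow_finrank (K := K₀) (V := K)
    rw [hK, hK₀, ← pow_mul] at h1
    have h3 : m = d * Module.finrank K₀ K := Nat.pow_right_injective hp.two_le h1
    exact (Nat.div_eq_of_eq_mul_right (Nat.pos_of_ne_zero hd) h3).symm
  have hodd : Odd (Module.finrank K₀ (Fin n → K)) := by
    rw [Module.finrank_pi_fintype]
    simp only [Finset.sum_const, Finset.card_univ, Fintype.card_fin, smul_eq_mul, hr]
    exact hn.mul hro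
  have hring : ringChar K₀ ≠ 2 := by
    rw [ringChar.eq K₀ p]; exact hp2
  have hfix : ∀ a : K₀, (algebraMap K₀ K a) ^ (p ^ k) = algebraMap K₀ K a := by
    intro a
    obtain ⟨e, rfl⟩ := hdk
    rw [← map_pow, pow_mul, ← hK₀, FiniteField.pow_card_pow]
  -- the quadratic map
  choose b hb1 hb2 hb3 hb4 hb5 using fun i => (hSQH i).2
  have hpol : ∀ x y i, QuadraticMap.polar F x y i = b i x y + b i y x := by
    intro x y i; rw [← hb5]; rfl
  have hsm : ∀ (a : K₀) (x : Fin n → K), a • x = (algebraMap K₀ K a) • x := by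
    intro a x; ext i; simp [Algebra.smul_def]
  let Q : QuadraticMap K₀ (Fin n → K) (Fin n → K) := QuadraticMap.ofPolar F
    (by
      intro a x
      rw [hsm, hhom, pow_succ, hfix, hsm, map_mul])
    (by
      intro x x' y; ext i
      simp only [hpol, Pi.add_apply, hb1, hb2]; ring)
    (by
      intro a x y; ext i
      rw [hsm, hsm]
      simp only [hpol, Pi.smul_apply, smul_eq_mul, hb3, hb4, hfix]; ring)
  have hQF : ∀ x, Q x = F x := fun x => rfl
  have hnd : ∀ x y, QuadraticMap.polar Q x y = 0 → x = 0 ∨ y = 0 := by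
    intro x y hxy
    have h1 : F (x + y) = F x + F y := by
      have : F (x + y) - F x - F y = 0 := hxy
      rw [sub_sub, sub_eq_zero] at this
      exact this
    have h3 : F (x - y) = F (x + y) := by
      have : QuadraticMap.polar Q x (-y) = 0 := by
        rw [QuadraticMap.polar_neg_right, hxy, neg_zero]
      have : F (x + -y) - F x - F (-y) = 0 := this
      rw [sub_sub, sub_eq_zero, hneg, ← h1, ← sub_eq_add_neg] at this
      exact this
    by_cases hs : x + y = 0
    · left
      rw [hs, (hzero 0).2 rfl, hzero] at h3
      apply htwo
      have e : x + x = (x + y) + (x - y) := by abel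
      rw [e, hs, h3, add_zero]
    · rcases hpm _ _ hs h3 with h | h
      · right
        apply htwo
        have e : y + y = (x + y) - (x - y) := by abel
        rw [e, h, sub_self]
      · left
        apply htwo
        have e : x + x = (x - y) + (x + y) := by abel
        rw [e, h, neg_add_cancel]
  -- move α into the subfield
  let a : K₀ := Algebra.norm K₀ α
  have haE := FiniteField.algebraMap_norm_eq_pow_sum K₀ K α
  rw [hr, Nat.card_eq_fintype_card, hK₀] at haE
  obtain ⟨t, ht⟩ := odd_geom (p ^ d) (m / d) hpodd.pow hro
  have haα : algebraMap K₀ K a = α * (α ^ t) ^ 2 := by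
    rw [haE, ht]; ring
  have hat : α ^ t ≠ 0 := pow_ne_zero _ hα
  have hans : ¬ IsSquare a := by
    rintro ⟨s, hs⟩
    have h1 : algebraMap K₀ K s * algebraMap K₀ K s = α * (α ^ t) ^ 2 := by
      rw [← haα, hs, map_mul]
    have h3 : α = (algebraMap K₀ K s * (α ^ t)⁻¹) ^ 2 := by
      field_simp
      rw [← h1]; ring
    refine hns _ ?_ h3
    intro h0
    rw [h0] at h3
    exact hα (by rw [h3]; simp)
  have hcount := count_two hring a hans hodd Q hnd
  ext w
  simp only [Set.mem_inter_iff, Set.mem_image, Set.mem_range, Set.mem_singleton_iff]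
  constructor
  · rintro ⟨⟨_, ⟨y, rfl⟩, hy⟩, ⟨x, hx⟩⟩
    by_contra hw
    have hx0 : x ≠ 0 := by rintro rfl; exact hw (by rw [← hx]; exact (hzero 0).2 rfl)
    have hy0 : y ≠ 0 := by
      rintro rfl; exact hw (by rw [← hy, (hzero 0).2 rfl, smul_zero])
    obtain ⟨c, hc0, hc⟩ := sq_is_pow (p ^ k + 1) hg ((α ^ t)⁻¹) (inv_ne_zero hat)
    have hcy : a • F (c • y) = w := by
      rw [hhom, hc, hsm, haα, smul_smul, ← hy]
      congr 1
      field_simp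
    have hcy0 : c • y ≠ 0 := smul_ne_zero hc0 hy0
    have hne : ∀ z : Fin n → K, z ≠ 0 → z ≠ -z := by
      intro z hz h
      exact hz (htwo z (by nth_rewrite 1 [h]; simp))
    have l1 : 2 ≤ (Finset.univ.filter (fun x => Q x = w)).card := by
      rw [← Finset.card_pair (hne x hx0)]
      apply Finset.card_le_card
      intro z hz
      simp only [Finset.mem_insert, Finset.mem_singleton] at hz
      rcases hz with rfl | rfl <;> simp [hQF, hneg, hx]
    have l2 : 2 ≤ (Finset.univ.filter (fun x => a • Q x = w)).card := by
      rw [← Finset.card_pair (hne _ hcy0)]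
      apply Finset.card_le_card
      intro z hz
      simp only [Finset.mem_insert, Finset.mem_singleton] at hz
      rcases hz with rfl | rfl <;>
        simp only [Finset.mem_filter, Finset.mem_univ, true_and, hQF, hneg, hcy]
    have := hcount w
    omega
  · rintro rfl
    have h0 : F 0 = 0 := (hzero 0).2 rfl
    exact ⟨⟨0, ⟨0, h0⟩, smul_zero _⟩, ⟨0, h0⟩⟩
end

section
/- Let q = p^m be odd, let k with k ≢ 0 (mod m) and m/gcd(k,m) odd, σ = p^k, d = gcd(k,m), and let a,b,c ∈ F_q be such that x^{σ²+σ+1} + c·x^{σ²+σ} + b·x^{σ²} + a = 0 has no solution x ∈ F_q. Let ∗ be the commutative pre-semifield multiplication on F_q^3 given by the polarization of F, i.e. (x,y,z) ∗ (u,v,w) = (x^σ u + x u^σ + a(y^σ w + v^σ z) + b(x^σ v + y v^σ) + c(x^σ w + u^σ z), a(y^σ v + y v^σ) + z^σ u + x w^σ + b(z^σ v + w^σ y) + c(x^σ v + u^σ y), z^σ w + z w^σ − (x^σ v + u^σ y)). Then the set of F_p-linear maps M : F_q^3 → F_q^3 with the property that for every u ∈ F_q^3 there exists r ∈ F_q^3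 such that M(x ∗ u) = x ∗ r for all x ∈ F_q^3, is exactly the set of scalar multiplication maps x ↦ C·x with C ∈ F_{p^d} (the subfield of F_q fixed by σ). Consequently the left and right nuclei and the center of the associated semifield are isomorphic to F_{p^d}. -/
section
set_option linter.unusedSectionVars false
variable {F K : Type*} [Field F] [Field K] [Algebra F K] [FiniteDimensional F K] [IsGalois F K]

theorem aux_indep (f : (K ≃ₐ[F] K) → K) (h : ∀ x, ∑ g, f g * g x = 0) (g) : f g = 0 := by
  have h1 := linearIndependent_monoidHom K K
  have h2 : LinearIndependent K (fun g : K ≃ₐ[F] K => (⇑((g : K →* K)) : K → K)) :=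
    h1.comp (fun g : K ≃ₐ[F] K => (g : K →* K)) (by
      intro g g' hg; ext x; exact DFunLike.congr_fun hg x)
  rw [Fintype.linearIndependent_iff] at h2
  refine h2 f ?_ g
  funext x
  simpa [Finset.sum_apply] using h x

theorem aux_coef (L : K →ₗ[F] K) : ∃ f : (K ≃ₐ[F] K) → K, ∀ x, L x = ∑ g, f g * g x := by
  have h2 : LinearIndependent K (fun g : K ≃ₐ[F] K => (g : K →ₗ[F] K)) := by
    rw [Fintype.linearIndependent_iff]
    intro f hf g
    refine aux_indep (F := F) f (fun x => ?_) g
    simpa using LinearMap.congr_fun hf x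
  have h3 := h2.span_eq_top_of_card_eq_finrank (by
    rw [Module.finrank_linearMap_self, ← Nat.card_eq_fintype_card, IsGalois.card_aut_eq_finrank])
  have h4 : L ∈ Submodule.span K (Set.range (fun g : K ≃ₐ[F] K => (g : K →ₗ[F] K))) := by
    rw [h3]; trivial
  rw [Submodule.mem_span_range_iff_exists_fun] at h4
  obtain ⟨f, hf⟩ := h4
  refine ⟨f, fun x => ?_⟩
  rw [← hf]; simp

theorem aux_two (g g' : K ≃ₐ[F] K) (hg : g ≠ g') (α β : K) (h : ∀ x, α * g x + β * g' x = 0) :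
    α = 0 ∧ β = 0 := by
  classical
  have := aux_indep (F := F) (K := K) (fun i => (if i = g then α else 0) + if i = g' then β else 0)
    (by intro x; simpa [add_mul, Finset.sum_add_distrib] using h x)
  constructor
  · simpa [hg] using this g
  · simpa [hg.symm] using this g'

theorem aux_one (g : K ≃ₐ[F] K) (α : K) (h : ∀ x, α * g x = 0) : α = 0 := by
  simpa using h 1

open Classical in
theorem aux_slot (σ : K ≃ₐ[F] K) {L1 L2 L3 : K →ₗ[F] K} {l1 l2 l3 : (K ≃ₐ[F] K) → K}
    (h1 : ∀ x, L1 x = ∑ g, l1 g * g x) (h2 : ∀ x, L2 x = ∑ g, l2 g * g x)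
    (h3 : ∀ x, L3 x = ∑ g, l3 g * g x) (A1 B1 A2 B2 A3 B3 R T : K)
    (h : ∀ x, L1 (σ x * A1 + x * B1) + L2 (σ x * A2 + x * B2) + L3 (σ x * A3 + x * B3)
      = σ x * R + x * T) (g : K ≃ₐ[F] K) :
    l1 g * g A1 + l1 (g * σ) * (g * σ) B1 + l2 g * g A2 + l2 (g * σ) * (g * σ) B2
     + l3 g * g A3 + l3 (g * σ) * (g * σ) B3 = (if g = 1 then R else 0)
      + (if g * σ = 1 then T else 0) := by
  have key : ∀ (l : (K ≃ₐ[F] K) → K) (A B x : K), ∑ g, l g * g (σ x * A + x * B)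
      = ∑ g, (l (g * σ⁻¹) * (g * σ⁻¹) A + l g * g B) * g x := by
    intro l A B x
    simp only [map_add, map_mul, mul_add, add_mul, Finset.sum_add_distrib]
    congr 1
    · rw [← Equiv.sum_comp (Equiv.mulRight σ)
        (fun g => (l (g * σ⁻¹) * (g * σ⁻¹) A) * g x)]
      refine Finset.sum_congr rfl fun g _ => ?_
      simp only [Equiv.coe_mulRight, mul_inv_cancel_right, AlgEquiv.mul_apply]
      ring
    · exact Finset.sum_congr rfl fun g _ => by ring
  have := aux_indep (F := F) (K := K) (fun g =>
     (l1 (g * σ⁻¹) * (g * σ⁻¹) A1 + l1 g * g B1) + (l2 (g * σ⁻¹) * (g * σ⁻¹) A2 + l2 g * g B2)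
     + (l3 (g * σ⁻¹) * (g * σ⁻¹) A3 + l3 g * g B3) - ((if g = σ then R else 0)
       + (if g = 1 then T else 0))) (by
      intro x
      have hx := h x
      rw [h1, h2, h3, key, key, key] at hx
      simp only [sub_mul, add_mul _ _ ((_ : K ≃ₐ[F] K) x), Finset.sum_sub_distrib,
        Finset.sum_add_distrib, ite_mul, zero_mul, Finset.sum_ite_eq', Finset.mem_univ, if_true] at hx ⊢
      rw [hx, AlgEquiv.one_apply]; ring) (g * σ)
  simp only [mul_inv_cancel_right, mul_eq_right] at this
  linear_combination this

theorem aux_core (σ : K ≃ₐ[F] K) (hs1 : σ ≠ 1) (hs2 : σ * σ ≠ 1) (a b c : K)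
    (L1 L2 L3 : K →ₗ[F] K) (ρ ς τ : K → K → K → K)
    (h : ∀ x y z u v w : K,
      L1 (σ x * u + x * σ u + a * (σ y * w + σ v * z) + b * (σ x * v + y * σ v)
          + c * (σ x * w + σ u * z)) +
      L2 (a * (σ y * v + y * σ v) + σ z * u + x * σ w + b * (σ z * v + σ w * y)
          + c * (σ x * v + σ u * y)) +
      L3 (σ z * w + z * σ w - (σ x * v + σ u * y)) =
      σ z * τ u v w + z * σ (τ u v w) - (σ x * ς u v w + σ (ρ u v w) * y)) :
    ∃ C : K, σ C = C ∧ (∀ x, L1 x = 0) ∧ (∀ x, L2 x = 0) ∧ (∀ x, L3 x = C * x) ∧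
      ∀ u v w, ρ u v w = C * u ∧ ς u v w = C * v ∧ τ u v w = C * w := by
  classical
  obtain ⟨l1, h1⟩ := aux_coef L1
  obtain ⟨l2, h2⟩ := aux_coef L2
  obtain ⟨l3, h3⟩ := aux_coef L3
  have X := fun u v w => aux_slot σ h1 h2 h3 (u + b * v + c * w) (σ u) (c * v) (σ w) (-v) 0
    (-ς u v w) 0 (by
      intro x
      have := h x 0 0 u v w
      simp only [map_zero, zero_mul, mul_zero, add_zero, zero_add, zero_sub] at this
      convert this using 1
      · congr 1
        · congr 2 <;> ring
        · congr 1; ring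
      · ring)
  have Z := fun u v w => aux_slot σ h1 h2 h3 0 (a * σ v + c * σ u) (u + b * v) 0 w (σ w)
    (τ u v w) (σ (τ u v w)) (by
      intro x
      have := h 0 0 x u v w
      simp only [map_zero, zero_mul, mul_zero, add_zero, zero_add, sub_zero] at this
      convert this using 1
      · congr 1
        · congr 2 <;> ring)
  have l1z : ∀ g, l1 g = 0 := by
    have hh : ∀ g, g ≠ 1 → l1 g = 0 ∧ l1 (g * σ) = 0 := by
      intro g hg
      refine aux_two g (g * σ * σ) (fun e => hs2 ?_) _ _ (fun u => ?_)
      · rw [mul_assoc] at e; exact left_eq_mul.mp e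
      · simpa [hg] using X u 0 0 g
    intro g
    by_cases hg : g = 1
    · have := (hh (σ⁻¹) (by simpa using hs1)).2
      simpa [hg] using this
    · exact (hh g hg).1
  have l2a : ∀ g, g ≠ 1 → l2 (g * σ) = 0 := by
    intro g hg
    refine aux_one (g * σ * σ) _ (fun w => ?_)
    simpa [hg, l1z] using X 0 0 w g
  have l2s : l2 σ = 0 := by
    refine aux_one σ _ (fun u => ?_)
    simpa [hs1, hs2, l1z, Z] using Z u 0 0 σ
  have l2z : ∀ g, l2 g = 0 := by
    intro g
    by_cases hg : g = σ
    · rw [hg, l2s]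
    · have := l2a (g * σ⁻¹) (by rwa [Ne, mul_inv_eq_one])
      simpa using this
  have l3z : ∀ g, g ≠ 1 → l3 g = 0 := by
    intro g hg
    refine aux_one g _ (fun v => ?_)
    simpa [hg, l1z, l2z] using X 0 v 0 g
  have L3 : ∀ x, L3 x = l3 1 * x := by
    intro x
    rw [h3, Finset.sum_eq_single 1]
    · simp
    · intro g _ hg; simp [l3z g hg]
    · simp
  have hsv : ∀ u v w, ς u v w = l3 1 * v := by
    intro u v w
    have := X u v w 1
    simp [l1z, l2z, hs1] at this
    exact this.symm
  have htv : ∀ u v w, τ u v w = l3 1 * w := by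
    intro u v w
    have := Z u v w 1
    simp [l1z, l2z, hs1, l3z] at this
    exact this.symm
  have hl : σ (l3 1) = l3 1 := by
    have := Z 0 0 1 σ⁻¹
    simp [l1z, l2z, hs1, l3z, htv] at this
    exact this.symm
  have L1z : ∀ x, L1 x = 0 := fun x => by simp [h1, l1z]
  have L2z : ∀ x, L2 x = 0 := fun x => by simp [h2, l2z]
  refine ⟨l3 1, hl, L1z, L2z, L3, fun u v w => ⟨?_, hsv u v w, htv u v w⟩⟩
  have := h 0 1 0 u v w
  simp [L1z, L2z, L3] at this
  apply σ.injective
  rw [map_mul, hl, this]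
end


/-- for the pre-semifield multiplication `∗` on `F_q^3` given by
the polarization of `F`, the `F_p`-linear (equivalently additive) maps `M` with
`M(x ∗ u) ∈ {x ∗ r : r}` for each `u` (i.e. `∀ u ∃ r, ∀ x, M(x ∗ u) = x ∗ r`)
are exactly the scalar maps `x ↦ C·x` with `C` in the fixed field `F_{p^d}` of
`σ` (where `d = gcd(k,m)`, `F_{p^d} = {C : C^{p^k} = C}`). Consequently the
left/right nuclei and the center are isomorphic to `F_{p^d}`. -/
theorem stmt17 {p m k : ℕ} (hp : p.Prime) (hpodd : Odd p) (hm : 0 < m)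
    (hk : ¬ m ∣ k) (hkm : Odd (m / Nat.gcd k m))
    {K : Type*} [Field K] [Fintype K] (hK : Fintype.card K = p ^ m)
    (a b c : K)
    (hnosol : ¬ ∃ x : K, x ^ (p ^ (2 * k) + p ^ k + 1) + c * x ^ (p ^ (2 * k) + p ^ k)
        + b * x ^ (p ^ (2 * k)) + a = 0)
    (star : K × K × K → K × K × K → K × K × K)
    (hstar : star = fun w u =>
      (w.1 ^ p ^ k * u.1 + w.1 * u.1 ^ p ^ k
          + a * (w.2.1 ^ p ^ k * u.2.2 + u.2.1 ^ p ^ k * w.2.2)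
          + b * (w.1 ^ p ^ k * u.2.1 + w.2.1 * u.2.1 ^ p ^ k)
          + c * (w.1 ^ p ^ k * u.2.2 + u.1 ^ p ^ k * w.2.2),
       a * (w.2.1 ^ p ^ k * u.2.1 + w.2.1 * u.2.1 ^ p ^ k)
          + w.2.2 ^ p ^ k * u.1 + w.1 * u.2.2 ^ p ^ k
          + b * (w.2.2 ^ p ^ k * u.2.1 + u.2.2 ^ p ^ k * w.2.1)
          + c * (w.1 ^ p ^ k * u.2.1 + u.1 ^ p ^ k * w.2.1),
       w.2.2 ^ p ^ k * u.2.2 + w.2.2 * u.2.2 ^ p ^ k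
          - (w.1 ^ p ^ k * u.2.1 + u.1 ^ p ^ k * w.2.1))) :
    ∀ M : K × K × K →+ K × K × K,
      (∀ u : K × K × K, ∃ r : K × K × K, ∀ x : K × K × K, M (star x u) = star x r) ↔
      (∃ C : K, C ^ p ^ k = C ∧ ∀ x : K × K × K, M x = C • x) := by
  haveI : Fact p.Prime := ⟨hp⟩
  have hchar : CharP K p := by
    obtain ⟨q, hq⟩ := CharP.exists K
    haveI := hq
    obtain ⟨n, hqp, hn⟩ := FiniteField.card K q
    rw [hK] at hn
    have : p = q := (Nat.prime_dvd_prime_iff_eq hp hqp).mp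
      (hp.dvd_of_dvd_pow (hn ▸ dvd_pow_self p hm.ne'))
    rwa [this]
  letI : Algebra (ZMod p) K := ZMod.algebra K p
  have hfin : Module.finrank (ZMod p) K = m := by
    have := Module.card_eq_pow_finrank (K := ZMod p) (V := K)
    rw [hK, ZMod.card] at this
    exact (Nat.pow_right_injective hp.two_le this).symm
  let φ := FiniteField.frobeniusAlgEquivOfAlgebraic (ZMod p) K
  have hord : orderOf φ = m := by
    rw [← hfin]; exact FiniteField.orderOf_frobeniusAlgEquivOfAlgebraic (ZMod p) K
  obtain ⟨σ, hσ⟩ : ∃ σ, σ = φ ^ k := ⟨_, rfl⟩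
  have hσa : ∀ x : K, x ^ p ^ k = σ x := by
    intro x
    have := congrFun (FiniteField.coe_frobeniusAlgEquivOfAlgebraic_iterate (ZMod p) K k) x
    rw [ZMod.card] at this
    rw [hσ, AlgEquiv.coe_pow]
    exact this.symm
  have hs1 : σ ≠ 1 := by
    intro e
    rw [hσ, ← orderOf_dvd_iff_pow_eq_one, hord] at e
    exact hk e
  have hs2 : σ * σ ≠ 1 := by
    intro e
    rw [hσ, ← pow_add, ← orderOf_dvd_iff_pow_eq_one, hord] at e
    apply hk
    have hg : 0 < Nat.gcd k m := Nat.gcd_pos_of_pos_right k hm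
    have hm' := Nat.div_mul_cancel (Nat.gcd_dvd_right k m)
    have hk' := Nat.div_mul_cancel (Nat.gcd_dvd_left k m)
    have h2 : m / Nat.gcd k m ∣ 2 * (k / Nat.gcd k m) := by
      apply Nat.dvd_of_mul_dvd_mul_right hg
      rw [hm', mul_assoc, hk', two_mul]
      exact e
    have h3 : m / Nat.gcd k m ∣ k / Nat.gcd k m :=
      (Nat.coprime_two_right.mpr hkm).dvd_of_dvd_mul_left h2
    rw [← hm']
    conv_rhs => rw [← hk']
    exact Nat.mul_dvd_mul_right h3 _
  intro M
  subst hstar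
  simp only [hσa]
  constructor
  · intro h
    choose r hr using h
    -- coordinates of an additive endomorphism
    let co : (K × K × K →+ K) → (K →+ K × K × K) → (K →ₗ[ZMod p] K) := fun P i =>
      AddMonoidHom.toZModLinearMap p (P.comp i)
    let i1 : K →+ K × K × K := AddMonoidHom.inl K (K × K)
    let i2 : K →+ K × K × K := (AddMonoidHom.inr K (K × K)).comp (AddMonoidHom.inl K K)
    let i3 : K →+ K × K × K := (AddMonoidHom.inr K (K × K)).comp (AddMonoidHom.inr K K)
    have hco : ∀ (P : K × K × K →+ K) (x y z : K),
        co P i1 x + co P i2 y + co P i3 z = P (x, y, z) := by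
      intro P x y z
      change P (x, 0, 0) + P (0, y, 0) + P (0, 0, z) = _
      rw [← map_add, ← map_add]
      simp
    let p1 : K × K × K →+ K := AddMonoidHom.fst K (K × K)
    let p2 : K × K × K →+ K := (AddMonoidHom.fst K K).comp (AddMonoidHom.snd K (K × K))
    let p3 : K × K × K →+ K := (AddMonoidHom.snd K K).comp (AddMonoidHom.snd K (K × K))
    obtain ⟨C, hC, h1, h2, h3, hr'⟩ := aux_core σ hs1 hs2 a b c (co (p3.comp M) i1)
      (co (p3.comp M) i2) (co (p3.comp M) i3) (fun u v w => (r (u, v, w)).1)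
      (fun u v w => (r (u, v, w)).2.1) (fun u v w => (r (u, v, w)).2.2) (by
        intro x y z u v w
        rw [hco]
        exact congrArg (fun t => t.2.2) (hr (u, v, w) (x, y, z)))
    refine ⟨C, hC, ?_⟩
    have hru : ∀ u v w, r (u, v, w) = (C * u, C * v, C * w) := by
      intro u v w
      obtain ⟨e1, e2, e3⟩ := hr' u v w
      exact Prod.ext e1 (Prod.ext e2 e3)
    have hzero : ∀ P : K × K × K →+ K,
        (∀ u v w x y z, P (
          σ x * u + x * σ u + a * (σ y * w + σ v * z) + b * (σ x * v + y * σ v)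
            + c * (σ x * w + σ u * z),
          a * (σ y * v + y * σ v) + σ z * u + x * σ w + b * (σ z * v + σ w * y)
            + c * (σ x * v + σ u * y),
          σ z * w + z * σ w - (σ x * v + σ u * y)) = 0) → ∀ x, P x = 0 := by
      rintro P hP ⟨x, y, z⟩
      obtain ⟨D, -, g1, g2, g3, g4⟩ := aux_core σ hs1 hs2 a b c (co P i1) (co P i2) (co P i3)
        (fun _ _ _ => 0) (fun _ _ _ => 0) (fun _ _ _ => 0) (by
          intro x y z u v w
          rw [hco, hP]
          simp)
      have hD : D = 0 := by simpa using (g4 1 1 1).1.symm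
      rw [← hco, g1, g2, g3, hD]; simp
    let N : K × K × K →+ K × K × K := M - AddMonoidHom.mulLeft (C, C, C)
    have hN : ∀ x, N x = M x - C • x := fun x => rfl
    have hNs : ∀ u v w x y z, N (
          σ x * u + x * σ u + a * (σ y * w + σ v * z) + b * (σ x * v + y * σ v)
            + c * (σ x * w + σ u * z),
          a * (σ y * v + y * σ v) + σ z * u + x * σ w + b * (σ z * v + σ w * y)
            + c * (σ x * v + σ u * y),
          σ z * w + z * σ w - (σ x * v + σ u * y)) = 0 := by
      intro u v w x y z
      have := hr (u, v, w) (x, y, z)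
      simp only [hru, map_mul, hC] at this
      rw [hN, this, sub_eq_zero]
      refine Prod.ext ?_ (Prod.ext ?_ ?_)
      · simp only [Prod.smul_mk, smul_eq_mul]; ring
      · simp only [Prod.smul_mk, smul_eq_mul]; ring
      · simp only [Prod.smul_mk, smul_eq_mul]; ring
    intro x
    have q1 := hzero (p1.comp N) (fun u v w x y z => congrArg p1 (hNs u v w x y z)) x
    have q2 := hzero (p2.comp N) (fun u v w x y z => congrArg p2 (hNs u v w x y z)) x
    have q3 := hzero (p3.comp N) (fun u v w x y z => congrArg p3 (hNs u v w x y z)) x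
    have : N x = 0 := Prod.ext q1 (Prod.ext q2 q3)
    rw [hN] at this
    exact sub_eq_zero.mp this
  · rintro ⟨C, hC, hM⟩ ⟨u, v, w⟩
    refine ⟨(C * u, C * v, C * w), ?_⟩
    rintro ⟨x, y, z⟩
    rw [hM]
    simp only [map_mul, hC]
    refine Prod.ext ?_ (Prod.ext ?_ ?_)
    · simp only [Prod.smul_mk, smul_eq_mul]; ring
    · simp only [Prod.smul_mk, smul_eq_mul]; ring
    · simp only [Prod.smul_mk, smul_eq_mul]; ring
end

section
/- Let q = p^m, let d be a divisor of m, τ = p^d, and let b_0,…,b_n ∈ F_q. Define the τ-linearized polynomials B(x) = Σ_{i=0}^{n} b_i·x^{τ^i} and B̃(x) = Σ_{i=0}^{n} b_{n−i}^{τ^i}·x^{τ^i} in F_q[x]. Then B and B̃, viewed as F_{p^d}-linear endomorphisms of F_q, have kernels of the same F_{p^d}-dimension; equivalently, B and B̃ have the same number of roots in F_q. -/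
/-- for `d | m`, `τ = p^d`, and coefficients `b_0,…,b_n ∈ F_q`,
the `τ`-linearized polynomials `B(x) = Σ b_i x^{τ^i}` and
`B̃(x) = Σ b_{n-i}^{τ^i} x^{τ^i}` have kernels of the same `F_{p^d}`-dimension
as `F_{p^d}`-linear endomorphisms of `F_q`; equivalently, they have the same
number of roots in `F_q`. -/
theorem stmt19 {p m d n : ℕ} (hp : p.Prime) (hm : 0 < m) (hd : d ∣ m)
    {K : Type*} [Field K] [Fintype K] (hK : Fintype.card K = p ^ m)
    (b : ℕ → K) :
    {x : K | ∑ i ∈ Finset.range (n + 1), b i * x ^ (p ^ d) ^ i = 0}.ncard =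
      {x : K | ∑ i ∈ Finset.range (n + 1),
        (b (n - i)) ^ (p ^ d) ^ i * x ^ (p ^ d) ^ i = 0}.ncard := by
  haveI : Fact p.Prime := ⟨hp⟩
  haveI : CharP K p := charP_of_card_eq_prime_pow hK
  letI : Algebra (ZMod p) K := ZMod.algebra K p
  -- the `i`-th power of the `p^d`-Frobenius as an algebra automorphism
  let φ : ℕ → (K ≃ₐ[ZMod p] K) := fun i =>
    (FiniteField.frobeniusAlgEquivOfAlgebraic (ZMod p) K) ^ (d * i)
  have hφ : ∀ i x, φ i x = x ^ (p ^ d) ^ i := by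
    intro i x
    simp only [φ]
    rw [AlgEquiv.coe_pow, FiniteField.coe_frobeniusAlgEquivOfAlgebraic_iterate, ZMod.card, pow_mul]
  have hadd : ∀ i j x, φ i (φ j x) = φ (i + j) x := by
    intro i j x
    simp only [hφ]
    rw [← pow_mul, ← pow_add, add_comm]
  have htr : ∀ i x, Algebra.trace (ZMod p) K (φ i x) = Algebra.trace (ZMod p) K x :=
    fun i x => Algebra.trace_eq_of_algEquiv (φ i) x
  let L : (ℕ → K) → (K →ₗ[ZMod p] K) := fun c =>
    ∑ i ∈ Finset.range (n + 1), (LinearMap.mulLeft (ZMod p) (c i)).comp (φ i).toLinearMap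
  have hL : ∀ c x, L c x = ∑ i ∈ Finset.range (n + 1), c i * x ^ (p ^ d) ^ i := by
    intro c x
    simp [L, LinearMap.sum_apply, hφ]
  let c : ℕ → K := fun i => (b (n - i)) ^ (p ^ d) ^ i
  have key : ∀ x y, Algebra.trace (ZMod p) K (L b x * y) =
      Algebra.trace (ZMod p) K (φ n x * L c y) := by
    intro x y
    rw [hL, hL, Finset.sum_mul, Finset.mul_sum, map_sum, map_sum,
      ← Finset.sum_range_reflect]
    refine Finset.sum_congr rfl fun i hi => ?_
    have hin : i ≤ n := Nat.lt_succ_iff.mp (Finset.mem_range.mp hi)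
    have e : n + 1 - 1 - i = n - i := by omega
    rw [e, ← htr i]
    congr 1
    simp only [c, ← hφ, map_mul, hadd]
    rw [Nat.add_sub_cancel' hin]
    ring
  have hnd : (Algebra.traceForm (ZMod p) K).Nondegenerate := traceForm_nondegenerate (ZMod p) K
  have hker : (L c).ker = (Algebra.traceForm (ZMod p) K).orthogonal (L b).range := by
    ext y
    rw [LinearMap.mem_ker, LinearMap.BilinForm.mem_orthogonal_iff]
    constructor
    · rintro h _ ⟨x, rfl⟩
      show Algebra.traceForm (ZMod p) K _ _ = 0
      rw [Algebra.traceForm_apply, key, h, mul_zero, map_zero]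
    · intro h
      refine hnd.2 _ fun z => ?_
      obtain ⟨x, rfl⟩ := (φ n).surjective z
      have h1 : Algebra.traceForm (ZMod p) K (L b x) y = 0 := h _ ⟨x, rfl⟩
      rw [Algebra.traceForm_apply] at h1 ⊢
      rw [← key, h1]
  have hfin : Module.finrank (ZMod p) (L b).ker = Module.finrank (ZMod p) (L c).ker := by
    rw [hker, LinearMap.BilinForm.finrank_orthogonal hnd]
    have := (L b).finrank_range_add_finrank_ker
    omega
  have hcard : Nat.card (L b).ker = Nat.card (L c).ker := by
    rw [Module.natCard_eq_pow_finrank (K := ZMod p), hfin,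
      ← Module.natCard_eq_pow_finrank (K := ZMod p)]
  have e1 : {x : K | ∑ i ∈ Finset.range (n + 1), b i * x ^ (p ^ d) ^ i = 0} =
      ((L b).ker : Set K) := by
    ext x; simp [LinearMap.mem_ker, hL]
  have e2 : {x : K | ∑ i ∈ Finset.range (n + 1),
      (b (n - i)) ^ (p ^ d) ^ i * x ^ (p ^ d) ^ i = 0} = ((L c).ker : Set K) := by
    ext x; simp [LinearMap.mem_ker, hL, c]
  rw [e1, e2, ← Nat.card_coe_set_eq, ← Nat.card_coe_set_eq]
  exact hcard
end
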